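/- There exists a universal constant C > 0 such that the following holds. Let X be an isotropic random vector in ℝⁿ with log-concave density which is ψ_α (α ∈ [1,2]) with constant b_α, and let A be an n×n real matrix with ‖A‖_HS² = n. Set ñ := n/(‖A‖_op²·b_α²). Then the thin-shell width satisfies √(Var(|AX|)) ≤ C·n^{1/2}·ñ^{−α/(2(2+α))}. -/

import Mathlib

open MeasureTheory ProbabilityTheory Real
open scoped ENNReal RealInnerProductSpace Pointwise NNReal

noncomputable section

/-- A nonnegative function is log-concave if `f(λx+(1-λ)y) ≥ f(x)^λ f(y)^{1-λ}`. -/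
def IsLogConcaveFn {E : Type*} [AddCommGroup E] [Module ℝ E] (f : E → ℝ) : Prop :=
  (∀ x, 0 ≤ f x) ∧
  ∀ x y : E, ∀ l : ℝ, 0 ≤ l → l ≤ 1 →
    f x ^ l * f y ^ (1 - l) ≤ f (l • x + (1 - l) • y)

/-- Hilbert-Schmidt (Frobenius) norm of a matrix. -/
def hsNorm {n : ℕ} (A : Matrix (Fin n) (Fin n) ℝ) : ℝ :=
  Real.sqrt (∑ i, ∑ j, (A i j) ^ 2)

/-- Operator norm of a matrix acting on Euclidean space. -/
def opNorm {n : ℕ} (A : Matrix (Fin n) (Fin n) ℝ) : ℝ :=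
  ‖LinearMap.toContinuousLinearMap (Matrix.toEuclideanLin A)‖

/-- Application of a matrix to a Euclidean vector. -/
def mApp {n : ℕ} (A : Matrix (Fin n) (Fin n) ℝ) (x : EuclideanSpace ℝ (Fin n)) :
    EuclideanSpace ℝ (Fin n) := Matrix.toEuclideanLin A x

/-- The random vector `X` has density `f` with respect to Lebesgue measure. -/
def HasDensityFn {Ω : Type*} [MeasurableSpace Ω] (P : Measure Ω) {n : ℕ}
    (X : Ω → EuclideanSpace ℝ (Fin n)) (f : EuclideanSpace ℝ (Fin n) → ℝ) : Prop :=
  Measurable X ∧ Measure.map X P = volume.withDensity fun x => ENNReal.ofReal (f x)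

/-- `X` is isotropic: centered with identity covariance. -/
def Isotropic {Ω : Type*} [MeasurableSpace Ω] (P : Measure Ω) {n : ℕ}
    (X : Ω → EuclideanSpace ℝ (Fin n)) : Prop :=
  (∫ ω, X ω ∂P) = 0 ∧
  ∀ θ η : EuclideanSpace ℝ (Fin n), (∫ ω, ⟪X ω, θ⟫ * ⟪X ω, η⟫ ∂P) = ⟪θ, η⟫

/-- `X` is ψ_α with constant `b`. -/
def IsPsiAlpha {Ω : Type*} [MeasurableSpace Ω] (P : Measure Ω) {n : ℕ}
    (X : Ω → EuclideanSpace ℝ (Fin n)) (α b : ℝ) : Prop :=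
  ∀ p : ℝ, 2 ≤ p → ∀ y : EuclideanSpace ℝ (Fin n),
    (∫ ω, |⟪X ω, y⟫| ^ p ∂P) ^ (1/p) ≤ b * p ^ (1/α) * (∫ ω, ⟪X ω, y⟫ ^ 2 ∂P) ^ ((1:ℝ)/2)

/-- `G` is a standard Gaussian random vector in `ℝⁿ`. -/
def IsStdGaussian {Ω : Type*} [MeasurableSpace Ω] (P : Measure Ω) {n : ℕ}
    (G : Ω → EuclideanSpace ℝ (Fin n)) : Prop :=
  Measurable G ∧
  Measure.map G P = volume.withDensity fun x =>
    ENNReal.ofReal ((2 * π) ^ (-(n:ℝ)/2) * Real.exp (-‖x‖ ^ 2 / 2))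

/-- Surface area of the unit sphere `S^{k-1}` in `ℝᵏ`. -/
def sphereVol (k : ℕ) : ℝ := 2 * π ^ ((k : ℝ)/2) / Real.Gamma ((k : ℝ)/2)

/-- The marginal density `π_F g(x) = ∫_{F^⊥} g(x+y) dy`. -/
def marginalDensity {n : ℕ} (g : EuclideanSpace ℝ (Fin n) → ℝ)
    (F : Submodule ℝ (EuclideanSpace ℝ (Fin n))) (x : EuclideanSpace ℝ (Fin n)) : ℝ :=
  ∫ y : Fᗮ, g (x + y)

/-- `h_{k,p}(u) = vol(S^{k-1}) ∫₀^∞ t^{p+k-1} π_{u(E₀)} g(t u(θ₀)) dt`. -/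
def hkp {n : ℕ} (g : EuclideanSpace ℝ (Fin n) → ℝ)
    (E₀ : Submodule ℝ (EuclideanSpace ℝ (Fin n))) (θ₀ : EuclideanSpace ℝ (Fin n))
    (k : ℕ) (p : ℝ) (u : Matrix (Fin n) (Fin n) ℝ) : ℝ :=
  sphereVol k * ∫ t in Set.Ioi (0:ℝ), t ^ (p + (k:ℝ) - 1) *
    marginalDensity g (Submodule.map (Matrix.toEuclideanLin u) E₀) (t • mApp u θ₀)

/-- Support functional of the one-sided L_q-centroid body `Z⁺_q(w)`. -/
def suppZplus {m : ℕ} (w : EuclideanSpace ℝ (Fin m) → ℝ) (q : ℝ)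
    (y : EuclideanSpace ℝ (Fin m)) : ℝ :=
  (2 * ∫ x, (max ⟪x, y⟫ 0) ^ q * w x) ^ (1/q)

/-- Ball's body `K_q(w) = {x : q ∫₀^∞ t^{q-1} w(tx) dt ≥ 1}`. -/
def ballBody {m : ℕ} (w : EuclideanSpace ℝ (Fin m) → ℝ) (q : ℝ) :
    Set (EuclideanSpace ℝ (Fin m)) :=
  {x | 1 ≤ q * ∫ t in Set.Ioi (0:ℝ), t ^ (q-1) * w (t • x)}

/-- The one-sided L_q-centroid body `Z⁺_q(w)`, as the convex set with support
functional `suppZplus w q`. -/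
def ZplusBody {m : ℕ} (w : EuclideanSpace ℝ (Fin m) → ℝ) (q : ℝ) :
    Set (EuclideanSpace ℝ (Fin m)) :=
  {x | ∀ y, ⟪x, y⟫ ≤ suppZplus w q y}

/-!
The variance of a `1`-Lipschitz function `φ` under a log-concave probability measure `ν` is at most
a constant times the Hilbert–Schmidt norm of the covariance matrix. For compactly supported `ν` this
is a stochastic localization argument with the process replaced by its generator: tilt `ν` to
`ν_{t,y} ∝ exp (⟪y, x⟫ - t ‖x‖² / 2) ν`, let `V` be the variance of `φ` and `R` the Hilbert–Schmidt
norm of the covariance under `ν_{t,y}`. With `m` the mean of `ν_{t,y}`, the operator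
`L = ∂ₜ + m · ∇ + Δ / 2` annihilates tilted integrals, whence `L V ≥ -R V`, and `L (R²) ≤ C R³` by
a reverse Hölder inequality for log-concave measures. With `U = 16 κ (R - κ t R²)`, this yields
`L (V - U) ≥ -R (V - U)` on the region `κ t R ≤ 1 / 2`. Where `κ t R = 1 / 2`, strong
log-concavity of `ν_{t,y}` gives `V ≤ 4 / t = 8 κ R ≤ U`. By the maximum principle `V ≤ U`, which at
`t = 0` reads `V ≤ 16 κ R`.

The law of `A X` has covariance `A Aᵀ`, whose Hilbert–Schmidt norm is at most `‖A‖_op ‖A‖_HS`.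
Since `b ≥ 1 / 2` and `α / (2 (2 + α)) ≤ 1 / 4`, this is stronger than the ψ_α bound.
-/

/-! ### The Prékopa–Leindler inequality -/

section PrekopaLeindler

theorem ennreal_mul_le_sq_of_add_le_two_mul {a b c : ℝ≥0∞} (h : a + b ≤ 2 * c) : a * b ≤ c ^ 2 := by
  rcases eq_or_ne c ∞ with rfl | hc
  · simp
  have hab : a + b ≠ ∞ := ne_top_of_le_ne_top (ENNReal.mul_ne_top (by simp) hc) h
  lift a to ℝ≥0 using (ENNReal.add_ne_top.mp hab).1
  lift b to ℝ≥0 using (ENNReal.add_ne_top.mp hab).2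
  lift c to ℝ≥0 using hc
  norm_cast at h ⊢
  have : 4 * (a * b) ≤ 4 * c ^ 2 := calc
    4 * (a * b) = 4 * a * b := by ring
    _ ≤ (a + b) ^ 2 := four_mul_le_sq_add a b
    _ ≤ (2 * c) ^ 2 := by gcongr
    _ = 4 * c ^ 2 := by ring
  exact le_of_mul_le_mul_left this (by norm_num)

theorem volume_add_volume_le_of_midpoint_mem_of_isCompact {K L W : Set ℝ} (hK : IsCompact K)
    (hL : IsCompact L) (hKne : K.Nonempty) (hLne : L.Nonempty)
    (hW : ∀ x ∈ K, ∀ y ∈ L, midpoint ℝ x y ∈ W) :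
    volume K + volume L ≤ 2 * volume W := by
  obtain ⟨a, haK, ha⟩ := hK.exists_isGreatest hKne
  obtain ⟨b, hbL, hb⟩ := hL.exists_isLeast hLne
  have hsub : (· + b) '' K ∪ (a + ·) '' L ⊆ (2 : ℝ) • W := by
    rintro z (⟨x, hx, rfl⟩ | ⟨y, hy, rfl⟩)
    · exact ⟨_, hW x hx b hbL, by simp [midpoint_eq_smul_add]⟩
    · exact ⟨_, hW a haK y hy, by simp [midpoint_eq_smul_add]⟩
  have hinter : (· + b) '' K ∩ (a + ·) '' L ⊆ {a + b} := by
    rintro z ⟨⟨x, hx, rfl⟩, y, hy, hxy⟩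
    exact le_antisymm (add_le_add_left (ha hx) b)
      ((add_le_add_right (hb hy) a).trans_eq hxy)
  calc volume K + volume L
      = volume ((· + b) '' K) + volume ((a + ·) '' L) := by
        simp only [Set.image_add_right, Set.image_add_left, measure_preimage_add,
          measure_preimage_add_right]
    _ = volume ((· + b) '' K ∪ (a + ·) '' L) :=
        (measure_union₀ (hL.image (by fun_prop)).measurableSet.nullMeasurableSet
          (measure_mono_null hinter (by simp))).symm
    _ ≤ volume ((2 : ℝ) • W) := measure_mono hsub
    _ = 2 * volume W := by simp [Measure.addHaar_smul]

theorem volume_add_volume_le_of_midpoint_mem {U V W : Set ℝ} (hU : MeasurableSet U)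
    (hV : MeasurableSet V) (hUne : U.Nonempty) (hVne : V.Nonempty)
    (hW : ∀ x ∈ U, ∀ y ∈ V, midpoint ℝ x y ∈ W) :
    volume U + volume V ≤ 2 * volume W := by
  obtain ⟨u, hu⟩ := hUne
  obtain ⟨v, hv⟩ := hVne
  rw [hU.measure_eq_iSup_isCompact, hV.measure_eq_iSup_isCompact]
  simp only [iSup_and']
  refine ENNReal.biSup_add_biSup_le' ⟨∅, by simp⟩ ⟨∅, by simp⟩ fun K hK L hL => ?_
  calc volume K + volume L ≤ volume (insert u K) + volume (insert v L) := by
        gcongr <;> exact Set.subset_insert _ _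
    _ ≤ 2 * volume W :=
        volume_add_volume_le_of_midpoint_mem_of_isCompact (hK.2.insert u) (hL.2.insert v)
          (Set.insert_nonempty _ _) (Set.insert_nonempty _ _) fun x hx y hy =>
            hW x (Set.insert_subset hu hK.1 hx) y (Set.insert_subset hv hL.1 hy)

theorem lintegral_eq_lintegral_Ioo_meas_lt {α : Type*} [MeasurableSpace α] (μ : Measure α)
    {f : α → ℝ≥0∞} (hf : Measurable f) (hf_le : ∀ x, f x ≤ 1) :
    ∫⁻ x, f x ∂μ = ∫⁻ s in Set.Ioo (0 : ℝ) 1, μ {x | ENNReal.ofReal s < f x} := by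
  have hf_top : ∀ x, f x ≠ ∞ := fun x => ne_top_of_le_ne_top ENNReal.one_ne_top (hf_le x)
  have hlevel : ∀ s ∈ Set.Ioi (0 : ℝ), μ {x | s < (f x).toReal}
      = (Set.Ioo (0 : ℝ) 1).indicator (fun s => μ {x | ENNReal.ofReal s < f x}) s := by
    intro s hs
    simp only [← ENNReal.ofReal_lt_iff_lt_toReal (le_of_lt hs) (hf_top _)]
    by_cases hs1 : s < 1
    · rw [Set.indicator_of_mem (Set.mem_Ioo.mpr ⟨hs, hs1⟩)]
    · have hempty : {x | ENNReal.ofReal s < f x} = ∅ := Set.eq_empty_of_forall_notMem fun x hx =>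
        hs1 (by simpa using hx.trans_le (hf_le x))
      rw [Set.indicator_of_notMem fun h => hs1 h.2, hempty, measure_empty]
  calc ∫⁻ x, f x ∂μ = ∫⁻ x, ENNReal.ofReal (f x).toReal ∂μ := by
        simp only [ENNReal.ofReal_toReal (hf_top _)]
    _ = ∫⁻ s in Set.Ioi 0, μ {x | s < (f x).toReal} :=
        lintegral_eq_lintegral_meas_lt μ (.of_forall fun _ => ENNReal.toReal_nonneg)
          hf.ennreal_toReal.aemeasurable
    _ = ∫⁻ s in Set.Ioo 0 1, μ {x | ENNReal.ofReal s < f x} := by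
        rw [setLIntegral_congr_fun measurableSet_Ioi hlevel,
          setLIntegral_indicator measurableSet_Ioo,
          Set.inter_eq_left.mpr fun s hs => hs.1]

theorem lintegral_add_lintegral_le_of_iSup_eq_one {f g h : ℝ → ℝ≥0∞} (hf : Measurable f)
    (hg : Measurable g) (hh : Measurable h) (hf1 : ⨆ x, f x = 1) (hg1 : ⨆ x, g x = 1)
    (hfgh : ∀ x y, f x * g y ≤ h (midpoint ℝ x y) ^ 2) :
    (∫⁻ x, f x) + ∫⁻ x, g x ≤ 2 * ∫⁻ x, h x := by
  have hne : ∀ {p : ℝ → ℝ≥0∞} {s : ℝ≥0∞}, ⨆ x, p x = 1 → s < 1 → {x | s < p x}.Nonempty :=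
    fun hp hs => let ⟨x, hx⟩ := lt_iSup_iff.mp (hs.trans_eq hp.symm); ⟨x, hx⟩
  have hlevel : ∀ s ∈ Set.Ioo (0 : ℝ) 1,
      volume {x | ENNReal.ofReal s < f x} + volume {x | ENNReal.ofReal s < g x}
        ≤ 2 * volume {x | ENNReal.ofReal s < min (h x) 1} := by
    intro s hs
    have hs1 : ENNReal.ofReal s < 1 := by simpa using hs.2
    refine volume_add_volume_le_of_midpoint_mem (measurableSet_lt measurable_const hf)
      (measurableSet_lt measurable_const hg) (hne hf1 hs1) (hne hg1 hs1)
      fun x hx y hy => lt_min (lt_of_pow_lt_pow_left' 2 ?_) hs1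
    calc ENNReal.ofReal s ^ 2 = ENNReal.ofReal s * ENNReal.ofReal s := sq _
      _ < f x * g y := ENNReal.mul_lt_mul hx hy
      _ ≤ h (midpoint ℝ x y) ^ 2 := hfgh x y
  calc (∫⁻ x, f x) + ∫⁻ x, g x
      = ∫⁻ s in Set.Ioo (0 : ℝ) 1, volume {x | ENNReal.ofReal s < f x}
          + volume {x | ENNReal.ofReal s < g x} := by
        rw [lintegral_eq_lintegral_Ioo_meas_lt volume hf fun x => hf1 ▸ le_iSup f x,
          lintegral_eq_lintegral_Ioo_meas_lt volume hg fun x => hg1 ▸ le_iSup g x,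
          lintegral_add_left]
        exact Antitone.measurable fun s t hst =>
          measure_mono fun x => (ENNReal.ofReal_le_ofReal hst).trans_lt
    _ ≤ ∫⁻ s in Set.Ioo (0 : ℝ) 1, 2 * volume {x | ENNReal.ofReal s < min (h x) 1} :=
        setLIntegral_mono' measurableSet_Ioo hlevel
    _ = 2 * ∫⁻ x, min (h x) 1 := by
        rw [lintegral_const_mul' _ _ (by simp), lintegral_eq_lintegral_Ioo_meas_lt volume
          (hh.min measurable_const) fun x => min_le_right _ _]
    _ ≤ 2 * ∫⁻ x, h x := by gcongr; exact min_le_left _ _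

theorem lintegral_mul_lintegral_le_sq_of_iSup_ne_top {f g h : ℝ → ℝ≥0∞} (hf : Measurable f)
    (hg : Measurable g) (hh : Measurable h) (hf_top : ⨆ x, f x ≠ ∞) (hg_top : ⨆ x, g x ≠ ∞)
    (hfgh : ∀ x y, f x * g y ≤ h (midpoint ℝ x y) ^ 2) :
    (∫⁻ x, f x) * ∫⁻ x, g x ≤ (∫⁻ x, h x) ^ 2 := by
  set a := ⨆ x, f x with ha
  set b := ⨆ x, g x with hb
  rcases eq_or_ne a 0 with ha0 | ha0
  · simp [ENNReal.iSup_eq_zero.mp (ha ▸ ha0)]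
  rcases eq_or_ne b 0 with hb0 | hb0
  · simp [ENNReal.iSup_eq_zero.mp (hb ▸ hb0)]
  set c : ℝ≥0∞ := (a * b) ^ (1 / 2 : ℝ) with hc
  have hcsq : c ^ 2 = a * b := by rw [hc, ← ENNReal.rpow_mul_natCast]; norm_num
  have hc_inv_sq : c⁻¹ ^ 2 = a⁻¹ * b⁻¹ := by
    rw [← ENNReal.inv_pow, hcsq, ENNReal.mul_inv (.inl ha0) (.inl hf_top)]
  have hnormalized : a⁻¹ * (∫⁻ x, f x) + b⁻¹ * ∫⁻ x, g x ≤ 2 * (c⁻¹ * ∫⁻ x, h x) := by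
    simp only [← lintegral_const_mul _ hf, ← lintegral_const_mul _ hg, ← lintegral_const_mul _ hh]
    refine lintegral_add_lintegral_le_of_iSup_eq_one (hf.const_mul _) (hg.const_mul _)
      (hh.const_mul _) ?_ ?_ fun x y => ?_
    · rw [← ENNReal.mul_iSup, ENNReal.inv_mul_cancel ha0 hf_top]
    · rw [← ENNReal.mul_iSup, ENNReal.inv_mul_cancel hb0 hg_top]
    · rw [mul_pow, hc_inv_sq, mul_mul_mul_comm]
      gcongr
      exact hfgh x y
  calc (∫⁻ x, f x) * ∫⁻ x, g x
      = a * b * (a⁻¹ * (∫⁻ x, f x) * (b⁻¹ * ∫⁻ x, g x)) := by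
        rw [mul_mul_mul_comm, ENNReal.mul_inv_cancel_left ha0 hf_top,
          ENNReal.mul_inv_cancel_left hb0 hg_top]
    _ ≤ c ^ 2 * (c⁻¹ * ∫⁻ x, h x) ^ 2 := by
        rw [hcsq]; gcongr; exact ennreal_mul_le_sq_of_add_le_two_mul hnormalized
    _ ≤ (∫⁻ x, h x) ^ 2 := by
        rw [← mul_pow, ← mul_assoc]
        gcongr
        exact mul_le_of_le_one_left' (ENNReal.mul_inv_le_one c)

theorem tendsto_lintegral_min_natCast {α : Type*} [MeasurableSpace α] (μ : Measure α)
    {f : α → ℝ≥0∞} (hf : Measurable f) :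
    Filter.Tendsto (fun k : ℕ => ∫⁻ x, min (f x) k ∂μ) Filter.atTop (nhds (∫⁻ x, f x ∂μ)) := by
  refine lintegral_tendsto_of_tendsto_of_monotone (fun k => (hf.min measurable_const).aemeasurable)
    (.of_forall fun x i j hij => min_le_min_left _ (by exact_mod_cast hij))
    (.of_forall fun x => ?_)
  simpa using (tendsto_const_nhds (x := f x)).min ENNReal.tendsto_nat_nhds_top

theorem prekopaLeindler_real {f g h : ℝ → ℝ≥0∞} (hf : Measurable f) (hg : Measurable g)
    (hh : Measurable h) (hfgh : ∀ x y, f x * g y ≤ h (midpoint ℝ x y) ^ 2) :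
    (∫⁻ x, f x) * ∫⁻ x, g x ≤ (∫⁻ x, h x) ^ 2 := by
  rcases eq_or_ne (∫⁻ x, f x) 0 with hf0 | hf0
  · simp [hf0]
  rcases eq_or_ne (∫⁻ x, g x) 0 with hg0 | hg0
  · simp [hg0]
  have hbdd : ∀ (p : ℝ → ℝ≥0∞) (k : ℕ), ⨆ x, min (p x) k ≠ ∞ := fun p k =>
    ne_top_of_le_ne_top (ENNReal.natCast_ne_top k) (iSup_le fun x => min_le_right _ _)
  refine le_of_tendsto' (ENNReal.Tendsto.mul (tendsto_lintegral_min_natCast volume hf) (.inl hf0)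
    (tendsto_lintegral_min_natCast volume hg) (.inl hg0)) fun k => ?_
  exact lintegral_mul_lintegral_le_sq_of_iSup_ne_top (hf.min measurable_const)
    (hg.min measurable_const) hh (hbdd f k) (hbdd g k) fun x y =>
      (mul_le_mul' (min_le_left _ _) (min_le_left _ _)).trans (hfgh x y)

end PrekopaLeindler

/-! ### Log-concave measures -/

section LogConcaveMeasure

/-- A measure is log-concave if it satisfies the Prékopa–Leindler inequality at midpoints. Stating
the definition through functions makes it stable under products and linear images with no
regularity assumption on the measure. -/
def IsLogConcaveMeasure {E : Type*} [AddCommGroup E] [Module ℝ E] [MeasurableSpace E]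
    (μ : Measure E) : Prop :=
  ∀ ⦃F G H : E → ℝ≥0∞⦄, Measurable F → Measurable G → Measurable H →
    (∀ x y, F x * G y ≤ H (midpoint ℝ x y) ^ 2) →
    (∫⁻ x, F x ∂μ) * ∫⁻ x, G x ∂μ ≤ (∫⁻ x, H x ∂μ) ^ 2

/-- A measure is `t`-strongly log-concave if it satisfies the Prékopa–Leindler inequality with the
gain `exp (t * ‖x - y‖ ^ 2 / 4)`, as do the measures whose density is a log-concave function times
`exp (-t * ‖x‖ ^ 2 / 2)` on a Euclidean space. -/
def IsStronglyLogConcaveMeasure {E : Type*} [NormedAddCommGroup E] [NormedSpace ℝ E]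
    [MeasurableSpace E] (t : ℝ) (μ : Measure E) : Prop :=
  ∀ ⦃F G H : E → ℝ≥0∞⦄, Measurable F → Measurable G → Measurable H →
    (∀ x y, F x * G y ≤ ENNReal.ofReal (exp (t * ‖x - y‖ ^ 2 / 4)) * H (midpoint ℝ x y) ^ 2) →
    (∫⁻ x, F x ∂μ) * ∫⁻ x, G x ∂μ ≤ (∫⁻ x, H x ∂μ) ^ 2

theorem isLogConcaveMeasure_volume_real : IsLogConcaveMeasure (volume : Measure ℝ) :=
  fun _ _ _ => prekopaLeindler_real

namespace IsLogConcaveMeasure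

variable {E F : Type*} [AddCommGroup E] [Module ℝ E] [MeasurableSpace E]
  [AddCommGroup F] [Module ℝ F] [MeasurableSpace F] {μ : Measure E} {ν : Measure F}

theorem dirac (a : E) : IsLogConcaveMeasure (Measure.dirac a) := by
  intro f g h hf hg hh hfgh
  simpa only [lintegral_dirac' _ hf, lintegral_dirac' _ hg, lintegral_dirac' _ hh, midpoint_self]
    using hfgh a a

theorem prod [SFinite ν] (hμ : IsLogConcaveMeasure μ) (hν : IsLogConcaveMeasure ν) :
    IsLogConcaveMeasure (μ.prod ν) := by
  intro f g h hf hg hh hfgh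
  rw [lintegral_prod _ hf.aemeasurable, lintegral_prod _ hg.aemeasurable,
    lintegral_prod _ hh.aemeasurable]
  exact hμ hf.lintegral_prod_right' hg.lintegral_prod_right' hh.lintegral_prod_right' fun a b =>
    hν (hf.comp measurable_prodMk_left) (hg.comp measurable_prodMk_left)
      (hh.comp measurable_prodMk_left) fun x y => hfgh (a, x) (b, y)

theorem map (hμ : IsLogConcaveMeasure μ) (L : E →ₗ[ℝ] F) (hL : Measurable L) :
    IsLogConcaveMeasure (μ.map L) := by
  intro f g h hf hg hh hfgh
  rw [lintegral_map hf hL, lintegral_map hg hL, lintegral_map hh hL]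
  exact hμ (hf.comp hL) (hg.comp hL) (hh.comp hL) fun x y => (hfgh (L x) (L y)).trans_eq
    (congrArg (h · ^ 2) (L.toAffineMap.map_midpoint x y).symm)

theorem smul (hμ : IsLogConcaveMeasure μ) (c : ℝ≥0∞) : IsLogConcaveMeasure (c • μ) := by
  intro f g h hf hg hh hfgh
  simp only [lintegral_smul_measure, smul_eq_mul]
  rw [mul_mul_mul_comm, ← sq, mul_pow]
  gcongr
  exact hμ hf hg hh hfgh

theorem withDensity (hμ : IsLogConcaveMeasure μ) {w : E → ℝ≥0∞} (hw : Measurable w)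
    (hmid : ∀ x y, w x * w y ≤ w (midpoint ℝ x y) ^ 2) :
    IsLogConcaveMeasure (μ.withDensity w) := by
  intro f g h hf hg hh hfgh
  rw [lintegral_withDensity_eq_lintegral_mul _ hw hf,
    lintegral_withDensity_eq_lintegral_mul _ hw hg, lintegral_withDensity_eq_lintegral_mul _ hw hh]
  refine hμ (hw.mul hf) (hw.mul hg) (hw.mul hh) fun x y => ?_
  simp only [Pi.mul_apply]
  rw [mul_mul_mul_comm, mul_pow]
  exact mul_le_mul' (hmid x y) (hfgh x y)

theorem restrict (hμ : IsLogConcaveMeasure μ) {K : Set E} (hK : MeasurableSet K)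
    (hconv : Convex ℝ K) : IsLogConcaveMeasure (μ.restrict K) := by
  rw [← withDensity_indicator_one hK]
  refine hμ.withDensity (measurable_one.indicator hK) fun x y => ?_
  by_cases hx : x ∈ K
  · by_cases hy : y ∈ K
    · simp [Set.indicator_of_mem, hx, hy, hconv.midpoint_mem hx hy]
    · simp [Set.indicator_of_notMem hy]
  · simp [Set.indicator_of_notMem hx]

theorem cond (hμ : IsLogConcaveMeasure μ) {K : Set E} (hK : MeasurableSet K)
    (hconv : Convex ℝ K) : IsLogConcaveMeasure μ[|K] :=
  (hμ.restrict hK hconv).smul _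

end IsLogConcaveMeasure

theorem isLogConcaveMeasure_volume_pi :
    ∀ n : ℕ, IsLogConcaveMeasure (volume : Measure (Fin n → ℝ))
  | 0 => by
    rw [Measure.volume_pi_eq_dirac 0]
    exact .dirac 0
  | n + 1 => by
    have hcons := (volume_preserving_piFinSuccAbove (fun _ : Fin (n + 1) => ℝ) 0).symm
    have heq : ⇑(MeasurableEquiv.piFinSuccAbove (fun _ : Fin (n + 1) => ℝ) 0).symm
        = Fin.consLinearEquiv ℝ fun _ : Fin (n + 1) => ℝ := by
      funext p
      exact Fin.insertNth_zero (α := fun _ => ℝ) p.1 p.2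
    rw [← hcons.map_eq, heq]
    exact (isLogConcaveMeasure_volume_real.prod (isLogConcaveMeasure_volume_pi n)).map
      (Fin.consLinearEquiv ℝ fun _ : Fin (n + 1) => ℝ).toLinearMap (heq ▸ hcons.measurable)

theorem isLogConcaveMeasure_volume_euclideanSpace (n : ℕ) :
    IsLogConcaveMeasure (volume : Measure (EuclideanSpace ℝ (Fin n))) := by
  have hvol := PiLp.volume_preserving_toLp (Fin n)
  rw [← hvol.map_eq]
  exact (isLogConcaveMeasure_volume_pi n).map
    (WithLp.linearEquiv 2 ℝ (Fin n → ℝ)).symm.toLinearMap hvol.measurable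

section NormedSpace

variable {E : Type*} [NormedAddCommGroup E] [NormedSpace ℝ E] [MeasurableSpace E] {μ : Measure E}
  {t : ℝ}

theorem IsStronglyLogConcaveMeasure.isLogConcaveMeasure (hμ : IsStronglyLogConcaveMeasure t μ)
    (ht : 0 ≤ t) : IsLogConcaveMeasure μ := fun f g h hf hg hh hfgh =>
  hμ hf hg hh fun x y => (hfgh x y).trans <| le_mul_of_one_le_left' <| by
    rw [ENNReal.one_le_ofReal, one_le_exp_iff]; positivity

theorem IsLogConcaveMeasure.isStronglyLogConcaveMeasure_tilted (hμ : IsLogConcaveMeasure μ)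
    {u : E → ℝ} (hu : Measurable u)
    (hmid : ∀ x y, u x + u y + t * ‖x - y‖ ^ 2 / 4 ≤ 2 * u (midpoint ℝ x y)) :
    IsStronglyLogConcaveMeasure t (μ.tilted u) := by
  intro f g h hf hg hh hfgh
  simp only [lintegral_tilted]
  set Z := ∫ x, exp (u x) ∂μ
  have : 0 ≤ Z := integral_nonneg fun x => (exp_pos _).le
  set w : E → ℝ≥0∞ := fun x => ENNReal.ofReal (exp (u x) / Z) with hw
  have hwm : Measurable w := by fun_prop
  have hw_mid : ∀ x y, w x * w y * ENNReal.ofReal (exp (t * ‖x - y‖ ^ 2 / 4))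
      ≤ w (midpoint ℝ x y) ^ 2 := by
    intro x y
    simp only [hw]
    rw [← ENNReal.ofReal_mul (by positivity), ← ENNReal.ofReal_mul (by positivity),
      ← ENNReal.ofReal_pow (by positivity), div_mul_div_comm, ← exp_add, div_mul_eq_mul_div,
      ← exp_add, div_pow, ← sq, ← exp_nat_mul]
    gcongr
    exact_mod_cast hmid x y
  refine hμ (hwm.mul hf) (hwm.mul hg) (hwm.mul hh) fun x y => ?_
  calc w x * f x * (w y * g y) = w x * w y * (f x * g y) := by ring
    _ ≤ w x * w y *
        (ENNReal.ofReal (exp (t * ‖x - y‖ ^ 2 / 4)) * h (midpoint ℝ x y) ^ 2) := by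
        gcongr _ * ?_
        exact hfgh x y
    _ = w x * w y * ENNReal.ofReal (exp (t * ‖x - y‖ ^ 2 / 4)) * h (midpoint ℝ x y) ^ 2 :=
        (mul_assoc _ _ _).symm
    _ ≤ (w (midpoint ℝ x y) * h (midpoint ℝ x y)) ^ 2 := by
        rw [mul_pow]
        gcongr
        exact hw_mid x y

end NormedSpace

end LogConcaveMeasure

/-! ### Moments of log-concave measures -/

section CompactSupport

/-- The measure `μ` is carried by a compact set, so that every continuous function has moments of
all orders. -/
def IsCompactlySupported {E : Type*} [TopologicalSpace E] [MeasurableSpace E] (μ : Measure E) :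
    Prop :=
  ∃ K : Set E, IsCompact K ∧ ∀ᵐ x ∂μ, x ∈ K

namespace IsCompactlySupported

variable {E F : Type*} [TopologicalSpace E] [MeasurableSpace E] [NormedAddCommGroup F]
  {μ ν : Measure E}

theorem mono_ac (hμ : IsCompactlySupported μ) (hν : ν ≪ μ) : IsCompactlySupported ν :=
  let ⟨K, hK, hμK⟩ := hμ
  ⟨K, hK, hν.ae_le hμK⟩

theorem prod {E' : Type*} [TopologicalSpace E'] [MeasurableSpace E'] {μ' : Measure E'}
    (hμ : IsCompactlySupported μ) (hμ' : IsCompactlySupported μ') :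
    IsCompactlySupported (μ.prod μ') := by
  obtain ⟨K, hK, hμK⟩ := hμ
  obtain ⟨K', hK', hμK'⟩ := hμ'
  refine ⟨K ×ˢ K', hK.prod hK', ?_⟩
  filter_upwards [Measure.quasiMeasurePreserving_fst.ae hμK,
    Measure.quasiMeasurePreserving_snd.ae hμK'] with p hp hp' using ⟨hp, hp'⟩

variable [OpensMeasurableSpace E] [SecondCountableTopologyEither E F] [IsFiniteMeasure μ]

theorem memLp (hμ : IsCompactlySupported μ) {f : E → F} (hf : Continuous f) (p : ℝ≥0∞) :
    MemLp f p μ := by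
  obtain ⟨K, hK, hμK⟩ := hμ
  obtain ⟨B, hB⟩ := hK.exists_bound_of_continuousOn hf.continuousOn
  exact MemLp.of_bound hf.aestronglyMeasurable B (hμK.mono hB)

theorem integrable (hμ : IsCompactlySupported μ) {f : E → F} (hf : Continuous f) :
    Integrable f μ :=
  memLp_one_iff_integrable.mp (hμ.memLp hf 1)

theorem continuous_integral {X : Type*} [TopologicalSpace X] [FirstCountableTopology X]
    [LocallyCompactSpace X] [NormedSpace ℝ F] (hμ : IsCompactlySupported μ) {f : X → E → F}
    (hf : Continuous f.uncurry) : Continuous fun x => ∫ y, f x y ∂μ := by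
  obtain ⟨K, hK, hμK⟩ := hμ
  rw [← Measure.restrict_eq_self_of_ae_mem hμK]
  exact continuous_parametric_integral_of_continuous hf hK

end IsCompactlySupported

theorem IsCompactlySupported.exists_ae_norm_le {E : Type*} [SeminormedAddGroup E]
    [MeasurableSpace E] {μ : Measure E} (hμ : IsCompactlySupported μ) :
    ∃ r, 0 ≤ r ∧ ∀ᵐ x ∂μ, ‖x‖ ≤ r := by
  obtain ⟨K, hK, hμK⟩ := hμ
  obtain ⟨r, hr, hKr⟩ := hK.isBounded.exists_pos_norm_le
  exact ⟨r, hr.le, hμK.mono hKr⟩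

end CompactSupport

section FourthMoment

theorem measurable_measure_lt {α : Type*} [MeasurableSpace α] (μ : Measure α) (f : α → ℝ) :
    Measurable fun t => μ {x | t < f x} :=
  Antitone.measurable fun _ _ hst => measure_mono fun _ => hst.trans_lt

theorem lintegral_rpow_four_le_of_tail_le {α : Type*} [MeasurableSpace α] {μ : Measure α}
    [IsProbabilityMeasure μ] {f : α → ℝ} (hf : Measurable f) (hf0 : ∀ x, 0 ≤ f x) {s : ℝ}
    (hs : 0 ≤ s) (htail : ∀ t, s ≤ t → μ {x | 3 * t < f x} ≤ ENNReal.ofReal (1 / 162) *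
      μ {x | t < f x}) :
    ∫⁻ x, ENNReal.ofReal ((f x / 3) ^ (4 : ℝ)) ∂μ ≤ ENNReal.ofReal (s ^ (4 : ℝ)) +
      ENNReal.ofReal (1 / 162) * ∫⁻ x, ENNReal.ofReal (f x ^ (4 : ℝ)) ∂μ := by
  have hlayer : ∀ {g : α → ℝ}, Measurable g → (∀ x, 0 ≤ g x) →
      ∫⁻ x, ENNReal.ofReal (g x ^ (4 : ℝ)) ∂μ = ENNReal.ofReal 4 * ∫⁻ t in Set.Ioi 0,
        μ {x | t < g x} * ENNReal.ofReal (t ^ ((4 : ℝ) - 1)) := fun hg hg0 =>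
    lintegral_rpow_eq_lintegral_meas_lt_mul μ (.of_forall hg0) hg.aemeasurable (by norm_num)
  have hpoint : ∀ t, μ {x | t < f x / 3} ≤
      μ {_x | t < s} + ENNReal.ofReal (1 / 162) * μ {x | t < f x} := by
    intro t
    by_cases hts : t < s
    · refine prob_le_one.trans (le_add_right ?_)
      simp [hts, Set.ofPred_true]
    · refine le_trans (le_of_eq ?_) ((htail t (not_lt.mp hts)).trans (le_add_left le_rfl))
      simp only [lt_div_iff₀' (zero_lt_three' ℝ)]
  have hconst : ENNReal.ofReal (s ^ (4 : ℝ)) = ∫⁻ _x, ENNReal.ofReal (s ^ (4 : ℝ)) ∂μ := by simp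
  have hmeas : Measurable fun t : ℝ => μ {_x : α | t < s} * ENNReal.ofReal (t ^ ((4 : ℝ) - 1)) :=
    (measurable_measure_lt μ _).mul (by fun_prop)
  rw [hconst, hlayer (hf.div_const 3) fun x => div_nonneg (hf0 x) zero_le_three, hlayer hf hf0,
    hlayer measurable_const fun _ => hs, mul_left_comm, ← mul_add,
    ← lintegral_const_mul' (ENNReal.ofReal (1 / 162)) _ ENNReal.ofReal_ne_top,
    ← lintegral_add_left hmeas]
  gcongr with t
  rw [← mul_assoc, ← add_mul]
  gcongr
  exact hpoint t

theorem integral_pow_four_le_of_tail_le {α : Type*} [MeasurableSpace α] {μ : Measure α}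
    [IsProbabilityMeasure μ] {f : α → ℝ} (hf : Measurable f) (hf0 : ∀ x, 0 ≤ f x)
    (hf4 : Integrable (fun x => f x ^ 4) μ) {s : ℝ} (hs : 0 ≤ s)
    (htail : ∀ t, s ≤ t → μ.real {x | 3 * t < f x} ≤ μ.real {x | t < f x} / 162) :
    ∫ x, f x ^ 4 ∂μ ≤ 162 * s ^ 4 := by
  have hpow : ∀ u : ℝ, u ^ (4 : ℝ) = u ^ 4 := fun u => by exact_mod_cast rpow_natCast u 4
  have : 0 ≤ ∫ x, f x ^ 4 ∂μ := integral_nonneg fun x => by positivity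
  have key := lintegral_rpow_four_le_of_tail_le hf hf0 hs fun t ht => by
    rw [← ofReal_measureReal (μ := μ), ← ofReal_measureReal (μ := μ),
      ← ENNReal.ofReal_mul (by norm_num)]
    exact ENNReal.ofReal_le_ofReal ((htail t ht).trans_eq (by ring))
  simp only [hpow, div_pow] at key
  rw [← ofReal_integral_eq_lintegral_ofReal (hf4.div_const _) (.of_forall fun x => by positivity),
    ← ofReal_integral_eq_lintegral_ofReal hf4 (.of_forall fun x => by positivity),
    ← ENNReal.ofReal_mul (by norm_num), ← ENNReal.ofReal_add (by positivity) (by positivity),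
    ENNReal.ofReal_le_ofReal_iff (by positivity), integral_div] at key
  linarith

/-- The constant of the reverse Hölder inequality between the fourth and the second moment of an
affine functional of a log-concave random vector. -/
def reverseHolderConst : ℝ := 162 * 324 ^ 2

variable {E : Type*} [AddCommGroup E] [Module ℝ E] [MeasurableSpace E] {μ : Measure E}

theorem IsLogConcaveMeasure.measure_three_mul_lt_abs_mul_le (hμ : IsLogConcaveMeasure μ)
    (l : E →ᵃ[ℝ] ℝ) (hl : Measurable l) (t : ℝ) :
    μ {x | 3 * t < |l x|} * μ {x | |l x| ≤ t} ≤ μ {x | t < |l x|} ^ 2 := by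
  have hfar : MeasurableSet {x | 3 * t < |l x|} := measurableSet_lt measurable_const hl.abs
  have hnear : MeasurableSet {x | |l x| ≤ t} := measurableSet_le hl.abs measurable_const
  have hmid : MeasurableSet {x | t < |l x|} := measurableSet_lt measurable_const hl.abs
  rw [← lintegral_indicator_one hfar, ← lintegral_indicator_one hnear,
    ← lintegral_indicator_one hmid]
  refine hμ (measurable_one.indicator hfar) (measurable_one.indicator hnear)
    (measurable_one.indicator hmid) fun x y => ?_
  by_cases hx : x ∈ {x | 3 * t < |l x|}
  · by_cases hy : y ∈ {x | |l x| ≤ t}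
    · have hxy : midpoint ℝ x y ∈ {x | t < |l x|} := by
        simp only [Set.mem_ofPred_eq] at hx hy ⊢
        have := abs_sub_abs_le_abs_sub (l x) (-l y)
        rw [abs_neg, sub_neg_eq_add] at this
        rw [l.map_midpoint, midpoint_eq_smul_add, invOf_eq_inv, smul_eq_mul, abs_mul, abs_inv,
          abs_two]
        linarith
      simp [Set.indicator_of_mem hx, Set.indicator_of_mem hy, Set.indicator_of_mem hxy]
    · simp [Set.indicator_of_notMem hy]
  · simp [Set.indicator_of_notMem hx]

theorem IsLogConcaveMeasure.measureReal_three_mul_lt_abs_le [IsProbabilityMeasure μ]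
    (hμ : IsLogConcaveMeasure μ) (l : E →ᵃ[ℝ] ℝ) (hl : Measurable l) {t : ℝ}
    (ht : μ.real {x | t < |l x|} ≤ 1 / 324) :
    μ.real {x | 3 * t < |l x|} ≤ μ.real {x | t < |l x|} / 162 := by
  set q := μ.real {x | t < |l x|} with hq
  have hcompl : μ.real {x | |l x| ≤ t} = 1 - q := by
    rw [hq, ← probReal_compl_eq_one_sub (measurableSet_lt measurable_const hl.abs)]
    congr 1
    ext x
    simp
  have hprod : μ.real {x | 3 * t < |l x|} * (1 - q) ≤ q ^ 2 := by
    have := ENNReal.toReal_mono (by finiteness) (hμ.measure_three_mul_lt_abs_mul_le l hl t)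
    rwa [ENNReal.toReal_mul, ENNReal.toReal_pow, ← measureReal_def, ← measureReal_def,
      ← measureReal_def, hcompl] at this
  nlinarith [measureReal_nonneg (μ := μ) (s := {x | 3 * t < |l x|}),
    measureReal_nonneg (μ := μ) (s := {x | t < |l x|})]

theorem IsLogConcaveMeasure.integral_pow_four_le [IsProbabilityMeasure μ]
    (hμ : IsLogConcaveMeasure μ) (l : E →ᵃ[ℝ] ℝ) (hl : Measurable l)
    (hl2 : Integrable (fun x => l x ^ 2) μ) (hl4 : Integrable (fun x => l x ^ 4) μ) :
    ∫ x, l x ^ 4 ∂μ ≤ reverseHolderConst * (∫ x, l x ^ 2 ∂μ) ^ 2 := by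
  set v := ∫ x, l x ^ 2 ∂μ
  have : 0 ≤ v := integral_nonneg fun x => sq_nonneg _
  have habs4 : ∀ x, |l x| ^ 4 = l x ^ 4 := fun x => Even.pow_abs (by decide) _
  have hchebyshev : ∀ t, √(324 * v) < t → μ.real {x | t < |l x|} ≤ 1 / 324 := by
    intro t ht
    have ht0 : 0 < t := (sqrt_nonneg _).trans_lt ht
    have hvt : 324 * v ≤ t ^ 2 := (sqrt_le_left ht0.le).mp ht.le
    have hmarkov : t ^ 2 * μ.real {x | t ^ 2 ≤ l x ^ 2} ≤ v :=
      mul_meas_ge_le_integral_of_nonneg (.of_forall fun x => sq_nonneg _) hl2 _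
    have hmono : μ.real {x | t < |l x|} ≤ μ.real {x | t ^ 2 ≤ l x ^ 2} :=
      measureReal_mono fun x (hx : t < |l x|) => sq_le_sq.mpr ((abs_of_pos ht0).trans_le hx.le)
    rw [le_div_iff₀ (by norm_num), ← mul_le_mul_iff_right₀ (pow_pos ht0 2)]
    nlinarith [mul_le_mul_of_nonneg_left hmono (sq_nonneg t)]
  have hbound : ∀ s, √(324 * v) < s → ∫ x, |l x| ^ 4 ∂μ ≤ 162 * s ^ 4 := fun s hs =>
    integral_pow_four_le_of_tail_le hl.abs (fun x => abs_nonneg _) (by simpa only [habs4] using hl4)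
      ((sqrt_nonneg _).trans hs.le) fun t ht =>
        hμ.measureReal_three_mul_lt_abs_le l hl (hchebyshev t (hs.trans_le ht))
  have hlim : ∫ x, |l x| ^ 4 ∂μ ≤ 162 * √(324 * v) ^ 4 :=
    le_of_tendsto_of_tendsto tendsto_const_nhds
      (((continuous_pow 4).const_mul 162).continuousWithinAt.tendsto (s := Set.Ioi √(324 * v)))
      (eventually_mem_nhdsWithin.mono hbound)
  calc ∫ x, l x ^ 4 ∂μ = ∫ x, |l x| ^ 4 ∂μ := by simp only [habs4]
    _ ≤ 162 * (√(324 * v) ^ 2) ^ 2 := by rw [← pow_mul]; exact hlim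
    _ = reverseHolderConst * v ^ 2 := by rw [sq_sqrt (by positivity), reverseHolderConst]; ring

end FourthMoment

section LipschitzVariance

theorem two_add_sq_div_two_le_exp_add_exp_neg (x : ℝ) : 2 + x ^ 2 / 2 ≤ exp x + exp (-x) := by
  rcases le_total 0 x with hx | hx
  · linarith [quadratic_le_exp_of_nonneg hx, add_one_le_exp (-x)]
  · linarith [quadratic_le_exp_of_nonneg (neg_nonneg.mpr hx), add_one_le_exp x, neg_sq x]

theorem one_le_integral_exp {α : Type*} [MeasurableSpace α] {μ : Measure α}
    [IsProbabilityMeasure μ] {u : α → ℝ} (hu : Integrable u μ) (hu0 : ∫ x, u x ∂μ = 0)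
    (hexp : Integrable (fun x => exp (u x)) μ) : 1 ≤ ∫ x, exp (u x) ∂μ := calc
  1 = ∫ x, (u x + 1) ∂μ := by rw [integral_add hu (integrable_const _), hu0]; simp
  _ ≤ ∫ x, exp (u x) ∂μ :=
    integral_mono (hu.add (integrable_const _)) hexp fun x => add_one_le_exp _

theorem variance_le_integral_exp_mul_integral_exp_neg {α : Type*} [MeasurableSpace α]
    {μ : Measure α} [IsProbabilityMeasure μ] {u : α → ℝ} (hu : MemLp u 2 μ)
    (hexp : Integrable (fun x => exp (u x)) μ) (hexp_neg : Integrable (fun x => exp (-u x)) μ) :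
    Var[u; μ] ≤ 2 * ((∫ x, exp (u x) ∂μ) * (∫ x, exp (-u x) ∂μ) - 1) := by
  set m := ∫ x, u x ∂μ with hm
  set v : α → ℝ := fun x => u x - m with hv
  have hvexp : ∀ x, exp (v x) = exp (-m) * exp (u x) := fun x => by rw [← exp_add]; congr 1; ring
  have hvexp_neg : ∀ x, exp (-v x) = exp m * exp (-u x) := fun x => by
    rw [← exp_add]; congr 1; simp only [hv]; ring
  have hiexp : Integrable (fun x => exp (v x)) μ := by simpa only [hvexp] using hexp.const_mul _
  have hiexp_neg : Integrable (fun x => exp (-v x)) μ := by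
    simpa only [hvexp_neg] using hexp_neg.const_mul _
  have hvL2 : MemLp v 2 μ := hu.sub (memLp_const m)
  have hvi : Integrable v μ := hvL2.integrable one_le_two
  have hv0 : ∫ x, v x ∂μ = 0 := by
    rw [integral_sub (hu.integrable one_le_two) (integrable_const _)]; simp [hm]
  have hp := one_le_integral_exp hvi hv0 hiexp
  have hq : 1 ≤ ∫ x, exp (-v x) ∂μ :=
    one_le_integral_exp hvi.neg (by simp [integral_neg, hv0]) hiexp_neg
  have hprod : (∫ x, exp (v x) ∂μ) * (∫ x, exp (-v x) ∂μ)
      = (∫ x, exp (u x) ∂μ) * ∫ x, exp (-u x) ∂μ := by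
    simp only [hvexp, hvexp_neg, integral_const_mul]
    rw [mul_mul_mul_comm, ← exp_add, neg_add_cancel, exp_zero, one_mul]
  have hsum : 2 + Var[u; μ] / 2 ≤ (∫ x, exp (v x) ∂μ) + ∫ x, exp (-v x) ∂μ := by
    rw [variance_eq_integral hu.aemeasurable, ← integral_add hiexp hiexp_neg]
    calc 2 + (∫ x, (u x - m) ^ 2 ∂μ) / 2 = ∫ x, (2 + v x ^ 2 / 2) ∂μ := by
          rw [integral_add (integrable_const _) (hvL2.integrable_sq.div_const 2), integral_div]
          simp [hv]
      _ ≤ _ := integral_mono ((integrable_const _).add (hvL2.integrable_sq.div_const 2))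
          (hiexp.add hiexp_neg) fun x => two_add_sq_div_two_le_exp_add_exp_neg _
  rw [← hprod]
  nlinarith [mul_nonneg (sub_nonneg.mpr hp) (sub_nonneg.mpr hq)]

variable {E : Type*} [NormedAddCommGroup E] [NormedSpace ℝ E] [MeasurableSpace E]
  {μ : Measure E} {t : ℝ}

theorem IsStronglyLogConcaveMeasure.integral_exp_mul_integral_exp_neg_le [IsProbabilityMeasure μ]
    (hμ : IsStronglyLogConcaveMeasure t μ) {u : E → ℝ} (hum : Measurable u)
    (hexp : Integrable (fun x => exp (u x)) μ) (hexp_neg : Integrable (fun x => exp (-u x)) μ)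
    (hu : ∀ x y, (u x - u y) ^ 2 ≤ t * ‖x - y‖ ^ 2) :
    (∫ x, exp (u x) ∂μ) * (∫ x, exp (-u x) ∂μ) ≤ exp 1 := by
  have key := hμ (F := fun x => ENNReal.ofReal (exp (u x)))
    (G := fun x => ENNReal.ofReal (exp (-u x))) (H := fun _ => ENNReal.ofReal (exp (1 / 2)))
    (by fun_prop) (by fun_prop) (by fun_prop) fun x y => by
      rw [← ENNReal.ofReal_mul (by positivity), ← ENNReal.ofReal_pow (by positivity),
        ← ENNReal.ofReal_mul (by positivity), ← exp_nat_mul, ← exp_add, ← exp_add]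
      refine ENNReal.ofReal_le_ofReal (exp_le_exp.mpr ?_)
      push_cast
      nlinarith [hu x y, sq_nonneg (u x - u y - 2)]
  rwa [← ofReal_integral_eq_lintegral_ofReal hexp (.of_forall fun x => by positivity),
    ← ofReal_integral_eq_lintegral_ofReal hexp_neg (.of_forall fun x => by positivity),
    lintegral_const, measure_univ, mul_one, ← ENNReal.ofReal_pow (by positivity),
    ← ENNReal.ofReal_mul (integral_nonneg fun x => by positivity),
    ENNReal.ofReal_le_ofReal_iff (by positivity), ← exp_nat_mul,
    show ((2 : ℕ) : ℝ) * (1 / 2) = 1 by norm_num] at key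

theorem IsStronglyLogConcaveMeasure.mul_variance_le [OpensMeasurableSpace E]
    [IsProbabilityMeasure μ] (hμ : IsStronglyLogConcaveMeasure t μ)
    (hsupp : IsCompactlySupported μ) (ht : 0 ≤ t) {φ : E → ℝ} (hφ : LipschitzWith 1 φ) :
    t * Var[φ; μ] ≤ 4 := by
  have hcont : Continuous fun x => √t * φ x := hφ.continuous.const_mul _
  have hexp : Integrable (fun x => exp (√t * φ x)) μ := hsupp.integrable hcont.rexp
  have hexp_neg : Integrable (fun x => exp (-(√t * φ x))) μ := hsupp.integrable hcont.neg.rexp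
  have hlip : ∀ x y, (√t * φ x - √t * φ y) ^ 2 ≤ t * ‖x - y‖ ^ 2 := fun x y => by
    rw [← mul_sub, mul_pow, sq_sqrt ht]
    gcongr t * ?_
    rw [← sq_abs, ← Real.norm_eq_abs]
    gcongr
    simpa using hφ.norm_sub_le x y
  calc t * Var[φ; μ] = Var[fun x => √t * φ x; μ] := by rw [variance_const_mul, sq_sqrt ht]
    _ ≤ 2 * ((∫ x, exp (√t * φ x) ∂μ) * (∫ x, exp (-(√t * φ x)) ∂μ) - 1) :=
      variance_le_integral_exp_mul_integral_exp_neg (hsupp.memLp hcont 2) hexp hexp_neg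
    _ ≤ 4 := by
      linarith [hμ.integral_exp_mul_integral_exp_neg_le hcont.measurable hexp hexp_neg hlip,
        exp_one_lt_three]

end LipschitzVariance

/-! ### Covariances and third moments -/

section Kernel

theorem sq_integral_mul_le {α : Type*} [MeasurableSpace α] {μ : Measure α} {f g : α → ℝ}
    (hf : MemLp f 2 μ) (hg : MemLp g 2 μ) :
    (∫ x, f x * g x ∂μ) ^ 2 ≤ (∫ x, f x ^ 2 ∂μ) * ∫ x, g x ^ 2 ∂μ := by
  have hff := hf.integrable_sq
  have hfg : Integrable (fun x => f x * g x) μ := hf.integrable_mul hg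
  have hquad : ∀ s : ℝ, 0 ≤ (∫ x, f x ^ 2 ∂μ) * (s * s) + (2 * ∫ x, f x * g x ∂μ) * s +
      ∫ x, g x ^ 2 ∂μ := fun s => calc
    0 ≤ ∫ x, (s * f x + g x) ^ 2 ∂μ := integral_nonneg fun x => sq_nonneg _
    _ = ∫ x, (s * s * f x ^ 2 + 2 * s * (f x * g x) + g x ^ 2) ∂μ := by
      congr 1 with x; ring
    _ = _ := by
      rw [integral_add (by fun_prop) hg.integrable_sq, integral_add (hff.const_mul _)
        (hfg.const_mul _), integral_const_mul, integral_const_mul]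
      ring
  have := discrim_le_zero hquad
  rw [discrim] at this
  linarith

theorem sq_covariance_le {α : Type*} [MeasurableSpace α] {μ : Measure α} [IsFiniteMeasure μ]
    {f g : α → ℝ} (hf : MemLp f 2 μ) (hg : MemLp g 2 μ) :
    cov[f, g; μ] ^ 2 ≤ Var[f; μ] * Var[g; μ] := by
  rw [variance_eq_integral hf.aemeasurable, variance_eq_integral hg.aemeasurable]
  exact sq_integral_mul_le (hf.sub (memLp_const _)) (hg.sub (memLp_const _))

section Moments

variable {α : Type*} [TopologicalSpace α] [SecondCountableTopology α] [LocallyCompactSpace α]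
  [MeasurableSpace α] [OpensMeasurableSpace α] {μ : Measure α} [IsFiniteMeasure μ]
  {k : α → α → ℝ} {C : ℝ}

theorem integral_sq_integral_sq_le (hμ : IsCompactlySupported μ) (hk : Continuous k.uncurry)
    (hk_symm : ∀ x y, k x y = k y x)
    (hk4 : ∀ x, ∫ y, k x y ^ 4 ∂μ ≤ C * (∫ y, k x y ^ 2 ∂μ) ^ 2) (hC : 0 ≤ C) :
    ∫ x, (∫ y, k x y ^ 2 ∂μ) ^ 2 ∂μ ≤ C * (∫ x, ∫ y, k x y ^ 2 ∂μ ∂μ) ^ 2 := by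
  set u : α → ℝ := fun x => ∫ y, k x y ^ 2 ∂μ with hu
  set J := ∫ x, u x ^ 2 ∂μ with hJ
  have hu_cont : Continuous u := hμ.continuous_integral (hk.pow 2)
  have hu0 : ∀ x, 0 ≤ u x := fun x => integral_nonneg fun y => sq_nonneg _
  have hJ0 : 0 ≤ J := integral_nonneg fun x => sq_nonneg _
  have hk_right : ∀ y, Continuous fun x => k x y := fun y =>
    hk.comp (continuous_id.prodMk continuous_const)
  have hcont : Continuous (Function.uncurry fun x y => u x * k x y ^ 2) :=
    show Continuous fun p : α × α => u p.1 * k p.1 p.2 ^ 2 from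
      (hu_cont.comp continuous_fst).mul (hk.pow 2)
  have hinner : ∀ y, ∫ x, u x * k x y ^ 2 ∂μ ≤ √(J * C) * u y := fun y => by
    refine le_of_sq_le_sq ?_ (by have := hu0 y; positivity)
    calc (∫ x, u x * k x y ^ 2 ∂μ) ^ 2 ≤ J * ∫ x, (k x y ^ 2) ^ 2 ∂μ :=
          sq_integral_mul_le (hμ.memLp hu_cont 2) (hμ.memLp ((hk_right y).pow 2) 2)
      _ = J * ∫ x, k y x ^ 4 ∂μ := by simp only [hk_symm _ y, ← pow_mul]
      _ ≤ J * (C * u y ^ 2) := mul_le_mul_of_nonneg_left (hk4 y) hJ0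
      _ = (√(J * C) * u y) ^ 2 := by rw [mul_pow, sq_sqrt (by positivity)]; ring
  have hJ_le : J ≤ √(J * C) * ∫ y, u y ∂μ := calc
    J = ∫ x, ∫ y, u x * k x y ^ 2 ∂μ ∂μ := by simp only [integral_const_mul, hJ, sq, hu]
    _ = ∫ y, ∫ x, u x * k x y ^ 2 ∂μ ∂μ := integral_integral_swap
      ((hμ.prod hμ).integrable hcont)
    _ ≤ ∫ y, √(J * C) * u y ∂μ := integral_mono
      (hμ.integrable (hμ.continuous_integral (hcont.comp continuous_swap)))
      (hμ.integrable (hu_cont.const_mul _)) hinner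
    _ = √(J * C) * ∫ y, u y ∂μ := integral_const_mul _ _
  rcases hJ0.eq_or_lt with hJ' | hJ'
  · rw [← hJ']; positivity
  · refine le_of_mul_le_mul_left ?_ hJ'
    calc J * J ≤ (√(J * C) * ∫ y, u y ∂μ) * (√(J * C) * ∫ y, u y ∂μ) :=
          mul_self_le_mul_self hJ0 hJ_le
      _ = J * (C * (∫ y, u y ∂μ) ^ 2) := by
          rw [mul_mul_mul_comm, mul_self_sqrt (by positivity)]; ring

theorem sq_integral_integral_pow_three_le (hμ : IsCompactlySupported μ)
    (hk : Continuous k.uncurry) (hk_symm : ∀ x y, k x y = k y x)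
    (hk4 : ∀ x, ∫ y, k x y ^ 4 ∂μ ≤ C * (∫ y, k x y ^ 2 ∂μ) ^ 2) (hC : 0 ≤ C) :
    (∫ x, ∫ y, k x y ^ 3 ∂μ ∂μ) ^ 2 ≤ C ^ 2 * (∫ x, ∫ y, k x y ^ 2 ∂μ ∂μ) ^ 3 := by
  have hprod : ∀ j : ℕ, ∫ p, k.uncurry p ^ j ∂μ.prod μ = ∫ x, ∫ y, k x y ^ j ∂μ ∂μ := fun j =>
    integral_prod _ ((hμ.prod hμ).integrable (hk.pow j))
  have hquartic : ∫ x, ∫ y, k x y ^ 4 ∂μ ∂μ ≤ C * ∫ x, (∫ y, k x y ^ 2 ∂μ) ^ 2 ∂μ := by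
    rw [← integral_const_mul]
    exact integral_mono (hμ.integrable (hμ.continuous_integral (hk.pow 4)))
      (hμ.integrable (((hμ.continuous_integral (hk.pow 2)).pow 2).const_mul _)) hk4
  have : 0 ≤ ∫ x, ∫ y, k x y ^ 2 ∂μ ∂μ :=
    integral_nonneg fun x => integral_nonneg fun y => sq_nonneg _
  calc (∫ x, ∫ y, k x y ^ 3 ∂μ ∂μ) ^ 2
      = (∫ p, k.uncurry p * k.uncurry p ^ 2 ∂μ.prod μ) ^ 2 := by
        simp only [← pow_succ', ← hprod]
    _ ≤ (∫ p, k.uncurry p ^ 2 ∂μ.prod μ) * ∫ p, (k.uncurry p ^ 2) ^ 2 ∂μ.prod μ :=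
        sq_integral_mul_le ((hμ.prod hμ).memLp hk 2) ((hμ.prod hμ).memLp (hk.pow 2) 2)
    _ = (∫ x, ∫ y, k x y ^ 2 ∂μ ∂μ) * ∫ x, ∫ y, k x y ^ 4 ∂μ ∂μ := by
        simp only [← pow_mul, hprod]
    _ ≤ (∫ x, ∫ y, k x y ^ 2 ∂μ ∂μ) * (C * (C * (∫ x, ∫ y, k x y ^ 2 ∂μ ∂μ) ^ 2)) := by
        gcongr
        exact hquartic.trans (mul_le_mul_of_nonneg_left
          (integral_sq_integral_sq_le hμ hk hk_symm hk4 hC) hC)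
    _ = C ^ 2 * (∫ x, ∫ y, k x y ^ 2 ∂μ ∂μ) ^ 3 := by ring

end Moments

theorem integral_integral_sum_mul {κ : Type*} [Fintype κ] {α : Type*} [MeasurableSpace α]
    {μ : Measure α} {g : κ → α → ℝ} (hg : ∀ a, Integrable (g a) μ) :
    ∫ x, ∫ y, ∑ a, g a x * g a y ∂μ ∂μ = ∑ a, (∫ x, g a x ∂μ) ^ 2 := by
  have hinner : ∀ x, ∫ y, ∑ a, g a x * g a y ∂μ = ∑ a, g a x * ∫ y, g a y ∂μ := fun x => by
    rw [integral_finsetSum _ fun a _ => (hg a).const_mul _]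
    simp only [integral_const_mul]
  simp only [hinner]
  rw [integral_finsetSum _ fun a _ => (hg a).mul_const _]
  simp only [integral_mul_const, sq]

variable {ι β : Type*} [Fintype ι] [MeasurableSpace β] {ν : Measure β} {z : ι → β → ℝ}

theorem integral_integral_sum_mul_pow_two
    (hz : ∀ i j, Integrable (fun x => z i x * z j x) ν) :
    ∫ x, ∫ y, (∑ i, z i x * z i y) ^ 2 ∂ν ∂ν = ∑ i, ∑ j, (∫ x, z i x * z j x ∂ν) ^ 2 := by
  have hsq : ∀ x y, (∑ i, z i x * z i y) ^ 2 =
      ∑ p : ι × ι, (z p.1 x * z p.2 x) * (z p.1 y * z p.2 y) := fun x y => by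
    rw [sq, Finset.sum_mul_sum, Fintype.sum_prod_type]
    exact Finset.sum_congr rfl fun i _ => Finset.sum_congr rfl fun j _ => by ring
  simp only [hsq]
  rw [integral_integral_sum_mul (g := fun (p : ι × ι) x => z p.1 x * z p.2 x) fun p => hz p.1 p.2,
    Fintype.sum_prod_type]

theorem integral_integral_sum_mul_pow_three
    (hz : ∀ i j k, Integrable (fun x => z i x * z j x * z k x) ν) :
    ∫ x, ∫ y, (∑ i, z i x * z i y) ^ 3 ∂ν ∂ν =
      ∑ i, ∑ j, ∑ k, (∫ x, z i x * z j x * z k x ∂ν) ^ 2 := by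
  have hcube : ∀ x y, (∑ i, z i x * z i y) ^ 3 = ∑ p : ι × ι × ι,
      (z p.1 x * z p.2.1 x * z p.2.2 x) * (z p.1 y * z p.2.1 y * z p.2.2 y) := fun x y => by
    simp only [Fintype.sum_prod_type, pow_succ' _ 2, sq, Finset.sum_mul_sum]
    simp only [Finset.mul_sum]
    exact Finset.sum_congr rfl fun i _ => Finset.sum_congr rfl fun j _ =>
      Finset.sum_congr rfl fun k _ => by ring
  simp only [hcube]
  rw [integral_integral_sum_mul (g := fun (p : ι × ι × ι) x => z p.1 x * z p.2.1 x * z p.2.2 x)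
    fun p => hz p.1 p.2.1 p.2.2]
  simp only [Fintype.sum_prod_type]

end Kernel

section CovarianceMatrix

variable {Ω ι : Type*} [MeasurableSpace Ω] [Fintype ι] {μ : Measure Ω} [IsFiniteMeasure μ]
  {X : ι → Ω → ℝ} {Y : Ω → ℝ}

theorem variance_sum_mul (hX : ∀ i, MemLp (X i) 2 μ) (a : ι → ℝ) :
    Var[fun ω => ∑ i, a i * X i ω; μ] = ∑ i, ∑ j, a i * a j * cov[X i, X j; μ] := by
  have haX : ∀ i, MemLp (fun ω => a i * X i ω) 2 μ := fun i => (hX i).const_mul (a i)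
  rw [← covariance_self (memLp_finsetSum _ fun i _ => haX i).aemeasurable,
    covariance_fun_sum_fun_sum haX haX]
  refine Finset.sum_congr rfl fun i _ => Finset.sum_congr rfl fun j _ => ?_
  rw [covariance_const_mul_left, covariance_const_mul_right, mul_assoc]

theorem sum_mul_covariance_nonneg (hX : ∀ i, MemLp (X i) 2 μ) (a : ι → ℝ) :
    0 ≤ ∑ i, ∑ j, a i * a j * cov[X i, X j; μ] := by
  rw [← variance_sum_mul hX]
  exact variance_nonneg _ _

theorem sum_covariance_mul_covariance_mul_covariance_nonneg (hX : ∀ i, MemLp (X i) 2 μ) :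
    0 ≤ ∑ i, ∑ j, cov[X i, X j; μ] * ∑ k, cov[X i, X k; μ] * cov[X j, X k; μ] := calc
  0 ≤ ∑ k, ∑ i, ∑ j, cov[X i, X k; μ] * cov[X j, X k; μ] * cov[X i, X j; μ] :=
    Finset.sum_nonneg fun k _ => sum_mul_covariance_nonneg hX _
  _ = _ := by
    rw [Finset.sum_comm]
    refine Finset.sum_congr rfl fun i _ => ?_
    rw [Finset.sum_comm]
    refine Finset.sum_congr rfl fun j _ => ?_
    rw [Finset.mul_sum]
    exact Finset.sum_congr rfl fun k _ => mul_comm _ _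

theorem sum_mul_mul_le_sqrt_mul_sum_sq (a : ι → ℝ) (M : ι → ι → ℝ) :
    ∑ i, ∑ j, a i * a j * M i j ≤ √(∑ i, ∑ j, M i j ^ 2) * ∑ i, a i ^ 2 := by
  have hcs := sum_mul_le_sqrt_mul_sqrt Finset.univ (fun p : ι × ι => M p.1 p.2)
    fun p => a p.1 * a p.2
  have hsq : ∑ i, ∑ j, (a i * a j) ^ 2 = (∑ i, a i ^ 2) ^ 2 := by
    simp only [mul_pow, ← Finset.mul_sum, ← Finset.sum_mul, sq (∑ i, a i ^ 2)]
  simp only [Fintype.sum_prod_type, hsq, sqrt_sq (Finset.sum_nonneg fun i _ => sq_nonneg (a i))]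
    at hcs
  simpa only [mul_comm (M _ _)] using hcs

theorem sum_sq_covariance_le (hX : ∀ i, MemLp (X i) 2 μ) (hY : MemLp Y 2 μ) :
    ∑ i, cov[X i, Y; μ] ^ 2 ≤ √(∑ i, ∑ j, cov[X i, X j; μ] ^ 2) * Var[Y; μ] := by
  set a : ι → ℝ := fun i => cov[X i, Y; μ]
  set A := ∑ i, a i ^ 2
  have haX : ∀ i, MemLp (fun ω => a i * X i ω) 2 μ := fun i => (hX i).const_mul (a i)
  have hA0 : 0 ≤ A := Finset.sum_nonneg fun i _ => sq_nonneg _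
  have hA : A = cov[fun ω => ∑ i, a i * X i ω, Y; μ] := by
    simp only [covariance_fun_sum_left haX hY, covariance_const_mul_left, A, a, sq]
  have hvar : Var[fun ω => ∑ i, a i * X i ω; μ] ≤ √(∑ i, ∑ j, cov[X i, X j; μ] ^ 2) * A :=
    (variance_sum_mul hX a).trans_le (sum_mul_mul_le_sqrt_mul_sum_sq a _)
  have hA_sq : A * A ≤ A * (√(∑ i, ∑ j, cov[X i, X j; μ] ^ 2) * Var[Y; μ]) := calc
    A * A = cov[fun ω => ∑ i, a i * X i ω, Y; μ] ^ 2 := by rw [← hA, sq]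
    _ ≤ Var[fun ω => ∑ i, a i * X i ω; μ] * Var[Y; μ] :=
      sq_covariance_le (memLp_finsetSum _ fun i _ => haX i) hY
    _ ≤ √(∑ i, ∑ j, cov[X i, X j; μ] ^ 2) * A * Var[Y; μ] :=
      mul_le_mul_of_nonneg_right hvar (variance_nonneg _ _)
    _ = _ := by ring
  rcases hA0.eq_or_lt with h | h
  · rw [← h]
    exact mul_nonneg (sqrt_nonneg _) (variance_nonneg _ _)
  · exact le_of_mul_le_mul_left hA_sq h

end CovarianceMatrix

section ThirdMoment

/-- The joint third central moment `E[(f - E f) (g - E g) (h - E h)]`. -/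
def thirdCentralMoment {α : Type*} [MeasurableSpace α] (f g h : α → ℝ) (μ : Measure α) : ℝ :=
  ∫ x, (f x - μ[f]) * (g x - μ[g]) * (h x - μ[h]) ∂μ

theorem thirdCentralMoment_eq_covariance_sub {α : Type*} [TopologicalSpace α]
    [MeasurableSpace α] [OpensMeasurableSpace α] {μ : Measure α} [IsProbabilityMeasure μ]
    (hμ : IsCompactlySupported μ) {f g h : α → ℝ} (hf : Continuous f) (hg : Continuous g)
    (hh : Continuous h) :
    thirdCentralMoment f g h μ =
      cov[fun x => f x * g x, h; μ] - (cov[f, h; μ] * μ[g] + μ[f] * cov[g, h; μ]) := by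
  have hcentered : ∫ x, (h x - μ[h]) ∂μ = 0 := by
    rw [integral_sub (hμ.integrable hh) (integrable_const _)]
    simp
  have hexpand : ∀ x, (f x - μ[f]) * (g x - μ[g]) * (h x - μ[h]) =
      (f x * g x - μ[fun x => f x * g x]) * (h x - μ[h]) -
        ((f x - μ[f]) * (h x - μ[h]) * μ[g] + μ[f] * ((g x - μ[g]) * (h x - μ[h]))) +
        (μ[fun x => f x * g x] - μ[f] * μ[g]) * (h x - μ[h]) := fun x => by ring
  have hint : ∀ {F : α → ℝ}, Continuous F → Integrable F μ := hμ.integrable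
  unfold thirdCentralMoment
  simp only [hexpand]
  rw [integral_add (hint (by fun_prop)) (hint (by fun_prop)),
    integral_sub (hint (by fun_prop)) (hint (by fun_prop)),
    integral_add (hint (by fun_prop)) (hint (by fun_prop)), integral_mul_const,
    integral_const_mul, integral_const_mul, hcentered, mul_zero, add_zero]
  rfl

variable {ι : Type*} [Fintype ι] {μ : Measure (EuclideanSpace ℝ ι)} [IsProbabilityMeasure μ]

/-- The squared Hilbert–Schmidt norm of the covariance matrix of `μ`. -/
def covHSSq (μ : Measure (EuclideanSpace ℝ ι)) : ℝ :=
  ∑ i, ∑ j, cov[fun x => x i, fun x => x j; μ] ^ 2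

theorem covHSSq_nonneg (μ : Measure (EuclideanSpace ℝ ι)) : 0 ≤ covHSSq μ :=
  Finset.sum_nonneg fun _ _ => Finset.sum_nonneg fun _ _ => sq_nonneg _

theorem IsLogConcaveMeasure.integral_inner_sub_pow_four_le (hμ : IsLogConcaveMeasure μ)
    (hsupp : IsCompactlySupported μ) (a b : EuclideanSpace ℝ ι) :
    ∫ x, ⟪a, x - b⟫ ^ 4 ∂μ ≤ reverseHolderConst * (∫ x, ⟪a, x - b⟫ ^ 2 ∂μ) ^ 2 := by
  set l : EuclideanSpace ℝ ι →ᵃ[ℝ] ℝ := (innerₛₗ ℝ a).toAffineMap - AffineMap.const ℝ _ ⟪a, b⟫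
  have hl : ∀ x, l x = ⟪a, x - b⟫ := fun x => (inner_sub_right a x b).symm
  have hl_cont : Continuous l := by simp only [funext hl]; fun_prop
  simp only [← hl]
  exact hμ.integral_pow_four_le l hl_cont.measurable (hsupp.integrable (hl_cont.pow 2))
    (hsupp.integrable (hl_cont.pow 4))

theorem IsLogConcaveMeasure.sum_sq_thirdCentralMoment_le (hμ : IsLogConcaveMeasure μ)
    (hsupp : IsCompactlySupported μ) :
    ∑ i, ∑ j, ∑ k, thirdCentralMoment (fun x => x i) (fun x => x j) (fun x => x k) μ ^ 2 ≤
      reverseHolderConst * √(covHSSq μ) ^ 3 := by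
  set z : ι → EuclideanSpace ℝ ι → ℝ := fun i x => x i - μ[fun x => x i] with hz
  set b : EuclideanSpace ℝ ι := WithLp.toLp 2 fun i => μ[fun x => x i] with hb
  set k : EuclideanSpace ℝ ι → EuclideanSpace ℝ ι → ℝ := fun x y => ⟪x - b, y - b⟫ with hk
  have hk_sum : ∀ x y, k x y = ∑ i, z i x * z i y := fun x y => by
    simp [hk, PiLp.inner_apply, hz, hb, mul_comm]
  have hcov : ∫ x, ∫ y, k x y ^ 2 ∂μ ∂μ = covHSSq μ := by
    simp only [hk_sum]
    exact integral_integral_sum_mul_pow_two fun i j => hsupp.integrable (by fun_prop)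
  have hthird : ∫ x, ∫ y, k x y ^ 3 ∂μ ∂μ = ∑ i, ∑ j, ∑ k,
      thirdCentralMoment (fun x => x i) (fun x => x j) (fun x => x k) μ ^ 2 := by
    simp only [hk_sum]
    exact integral_integral_sum_mul_pow_three fun i j k => hsupp.integrable (by fun_prop)
  rw [← hthird]
  refine le_of_sq_le_sq ?_ (by unfold reverseHolderConst; positivity)
  calc (∫ x, ∫ y, k x y ^ 3 ∂μ ∂μ) ^ 2
      ≤ reverseHolderConst ^ 2 * (∫ x, ∫ y, k x y ^ 2 ∂μ ∂μ) ^ 3 :=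
        sq_integral_integral_pow_three_le hsupp
          (show Continuous fun p : _ × _ => ⟪p.1 - b, p.2 - b⟫ by fun_prop)
          (fun x y => real_inner_comm _ _)
          (fun x => hμ.integral_inner_sub_pow_four_le hsupp (x - b) b)
          (by unfold reverseHolderConst; positivity)
    _ = (reverseHolderConst * √(covHSSq μ) ^ 3) ^ 2 := by
        rw [hcov, mul_pow, ← pow_mul, mul_comm 3 2, pow_mul, sq_sqrt (covHSSq_nonneg μ)]

end ThirdMoment

/-! ### Derivatives of exponential tilts -/

section TiltDerivative

theorem integral_tilted_eq_div {α : Type*} [MeasurableSpace α] {ν : Measure α} (c h : α → ℝ) :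
    ∫ x, h x ∂ν.tilted c = (∫ x, h x * exp (c x) ∂ν) / ∫ x, exp (c x) ∂ν := by
  rw [integral_tilted, ← integral_div]
  exact integral_congr_ae (.of_forall fun x => by simp only [smul_eq_mul]; ring)

variable {α : Type*} [TopologicalSpace α] [MeasurableSpace α] [OpensMeasurableSpace α]
  {ν : Measure α} {h k c l : α → ℝ}

theorem IsCompactlySupported.isProbabilityMeasure_tilted [IsFiniteMeasure ν] [NeZero ν]
    (hν : IsCompactlySupported ν) (hc : Continuous c) : IsProbabilityMeasure (ν.tilted c) :=
  _root_.MeasureTheory.isProbabilityMeasure_tilted (hν.integrable (by fun_prop))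

theorem IsCompactlySupported.hasDerivAt_integral_mul_exp [IsFiniteMeasure ν]
    (hν : IsCompactlySupported ν) (hh : Continuous h) (hc : Continuous c) (hl : Continuous l)
    (s : ℝ) :
    HasDerivAt (fun s => ∫ x, h x * exp (c x + s * l x) ∂ν)
      (∫ x, h x * l x * exp (c x + s * l x) ∂ν) s := by
  obtain ⟨K, hK, hνK⟩ := id hν
  obtain ⟨B, hB⟩ := ((isCompact_Icc (a := s - 1) (b := s + 1)).prod hK).exists_bound_of_continuousOn
    (f := fun p : ℝ × α => h p.2 * l p.2 * exp (c p.2 + p.1 * l p.2)) (by fun_prop)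
  refine (hasDerivAt_integral_of_dominated_loc_of_deriv_le (bound := fun _ => B)
    (F := fun s x => h x * exp (c x + s * l x))
    (F' := fun s x => h x * l x * exp (c x + s * l x))
    (Icc_mem_nhds (sub_one_lt s) (lt_add_one s)) (.of_forall fun u => ?_)
    (hν.integrable (by fun_prop)) (hν.integrable (by fun_prop)).aestronglyMeasurable ?_
    (integrable_const B) (.of_forall fun x u _ => ?_)).2
  · exact (hν.integrable (by fun_prop)).aestronglyMeasurable
  · filter_upwards [hνK] with x hx u hu using hB (u, x) ⟨hu, hx⟩
  · have hexponent : HasDerivAt (fun u => c x + u * l x) (l x) u := by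
      simpa using ((hasDerivAt_id u).mul_const (l x)).const_add (c x)
    exact (hexponent.exp.const_mul (h x)).congr_deriv (by ring)

theorem IsCompactlySupported.covariance_eq_sub [IsProbabilityMeasure ν]
    (hν : IsCompactlySupported ν) (hh : Continuous h) (hk : Continuous k) :
    cov[h, k; ν] = ∫ x, h x * k x ∂ν - (∫ x, h x ∂ν) * ∫ x, k x ∂ν :=
  ProbabilityTheory.covariance_eq_sub (hν.memLp hh 2) (hν.memLp hk 2)

variable [IsFiniteMeasure ν] [NeZero ν]

theorem IsCompactlySupported.hasDerivAt_integral_tilted (hν : IsCompactlySupported ν)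
    (hh : Continuous h) (hc : Continuous c) (hl : Continuous l) (s : ℝ) :
    HasDerivAt (fun s => ∫ x, h x ∂ν.tilted fun x => c x + s * l x)
      cov[h, l; ν.tilted fun x => c x + s * l x] s := by
  have hcont : Continuous fun x => c x + s * l x := by fun_prop
  have hprob := hν.isProbabilityMeasure_tilted hcont
  have hZ : (∫ x, exp (c x + s * l x) ∂ν) ≠ 0 :=
    (integral_exp_pos (hν.integrable (by fun_prop))).ne'
  have hnum := hν.hasDerivAt_integral_mul_exp hh hc hl s
  have hden := hν.hasDerivAt_integral_mul_exp (continuous_const (y := (1 : ℝ))) hc hl s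
  simp only [one_mul] at hden
  rw [(hν.mono_ac (tilted_absolutelyContinuous ν _)).covariance_eq_sub hh hl]
  simp only [integral_tilted_eq_div]
  refine (hnum.fun_div hden hZ).congr_deriv ?_
  rw [div_mul_div_comm, ← sq, div_sub_div _ _ hZ (pow_ne_zero 2 hZ),
    div_eq_div_iff (pow_ne_zero 2 hZ) (mul_ne_zero hZ (pow_ne_zero 2 hZ))]
  ring

theorem IsCompactlySupported.hasDerivAt_covariance_tilted (hν : IsCompactlySupported ν)
    (hh : Continuous h) (hk : Continuous k) (hc : Continuous c) (hl : Continuous l) (s : ℝ) :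
    HasDerivAt (fun s => cov[h, k; ν.tilted fun x => c x + s * l x])
      (thirdCentralMoment h k l (ν.tilted fun x => c x + s * l x)) s := by
  have hprob : ∀ s, IsProbabilityMeasure (ν.tilted fun x => c x + s * l x) := fun s =>
    hν.isProbabilityMeasure_tilted (by fun_prop)
  have hsupp : ∀ s, IsCompactlySupported (ν.tilted fun x => c x + s * l x) := fun s =>
    hν.mono_ac (tilted_absolutelyContinuous ν _)
  rw [thirdCentralMoment_eq_covariance_sub (hsupp s) hh hk hl]
  simp only [fun s => (hsupp s).covariance_eq_sub hh hk]
  exact (hν.hasDerivAt_integral_tilted (hh.mul hk) hc hl s).fun_sub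
    ((hν.hasDerivAt_integral_tilted hh hc hl s).fun_mul (hν.hasDerivAt_integral_tilted hk hc hl s))

end TiltDerivative

/-! ### Stochastic localization -/

section Localization

variable {ι : Type*}

/-- The exponent `⟪y, x⟫ - t‖x‖² / 2` of the tilts of stochastic localization. -/
def tiltFn [Fintype ι] (t : ℝ) (y x : EuclideanSpace ℝ ι) : ℝ := ⟪y, x⟫ - t * ‖x‖ ^ 2 / 2

/-- The stochastic localization of `ν` at time `t`, in the state `y` of the tilting process. -/
def localization [Fintype ι] (ν : Measure (EuclideanSpace ℝ ι)) (t : ℝ)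
    (y : EuclideanSpace ℝ ι) : Measure (EuclideanSpace ℝ ι) :=
  ν.tilted (tiltFn t y)

variable [Fintype ι] {ν : Measure (EuclideanSpace ℝ ι)}

@[fun_prop]
theorem continuous_tiltFn {X : Type*} [TopologicalSpace X] {t : X → ℝ}
    {y z : X → EuclideanSpace ℝ ι} (ht : Continuous t) (hy : Continuous y) (hz : Continuous z) :
    Continuous fun p => tiltFn (t p) (y p) (z p) := by
  unfold tiltFn
  fun_prop

theorem localization_zero_zero [IsProbabilityMeasure ν] : localization ν 0 0 = ν := by
  have : tiltFn 0 (0 : EuclideanSpace ℝ ι) = 0 := by ext; simp [tiltFn]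
  rw [localization, this, tilted_zero]

theorem isCompactlySupported_localization (hν : IsCompactlySupported ν) (t : ℝ)
    (y : EuclideanSpace ℝ ι) : IsCompactlySupported (localization ν t y) :=
  hν.mono_ac (tilted_absolutelyContinuous ν _)

theorem isProbabilityMeasure_localization [IsFiniteMeasure ν] [NeZero ν]
    (hν : IsCompactlySupported ν) (t : ℝ) (y : EuclideanSpace ℝ ι) :
    IsProbabilityMeasure (localization ν t y) :=
  hν.isProbabilityMeasure_tilted (by fun_prop)

theorem IsLogConcaveMeasure.isStronglyLogConcaveMeasure_localization
    (hν : IsLogConcaveMeasure ν) (t : ℝ) (y : EuclideanSpace ℝ ι) :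
    IsStronglyLogConcaveMeasure t (localization ν t y) := by
  refine hν.isStronglyLogConcaveMeasure_tilted (by fun_prop : Continuous (tiltFn t y)).measurable
    fun x z => le_of_eq ?_
  have hmid : midpoint ℝ x z = (2⁻¹ : ℝ) • (x + z) := by simp [midpoint_eq_smul_add]
  rw [tiltFn, tiltFn, tiltFn, hmid, inner_smul_right, inner_add_right, norm_smul, mul_pow,
    norm_add_sq_real, norm_sub_sq_real]
  norm_num
  ring

theorem IsCompactlySupported.continuous_integral_localization [IsFiniteMeasure ν] [NeZero ν]
    (hν : IsCompactlySupported ν) {h : EuclideanSpace ℝ ι → ℝ} (hh : Continuous h) :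
    Continuous fun p : ℝ × EuclideanSpace ℝ ι => ∫ x, h x ∂localization ν p.1 p.2 := by
  simp only [localization, integral_tilted_eq_div]
  refine Continuous.div (hν.continuous_integral ?_) (hν.continuous_integral ?_) fun p =>
    (integral_exp_pos (hν.integrable ?_)).ne'
  · change Continuous fun p : (ℝ × EuclideanSpace ℝ ι) × EuclideanSpace ℝ ι =>
      h p.2 * exp (tiltFn p.1.1 p.1.2 p.2)
    fun_prop
  · change Continuous fun p : (ℝ × EuclideanSpace ℝ ι) × EuclideanSpace ℝ ι =>
      exp (tiltFn p.1.1 p.1.2 p.2)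
    fun_prop
  · exact by fun_prop

theorem IsCompactlySupported.continuous_covariance_localization [IsFiniteMeasure ν] [NeZero ν]
    (hν : IsCompactlySupported ν) {h k : EuclideanSpace ℝ ι → ℝ} (hh : Continuous h)
    (hk : Continuous k) :
    Continuous fun p : ℝ × EuclideanSpace ℝ ι => cov[h, k; localization ν p.1 p.2] := by
  have := isProbabilityMeasure_localization hν
  simp only [(isCompactlySupported_localization hν _ _).covariance_eq_sub hh hk]
  exact (hν.continuous_integral_localization (hh.mul hk)).sub
    ((hν.continuous_integral_localization hh).mul (hν.continuous_integral_localization hk))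

theorem IsCompactlySupported.continuous_covHSSq_localization [IsFiniteMeasure ν] [NeZero ν]
    (hν : IsCompactlySupported ν) :
    Continuous fun p : ℝ × EuclideanSpace ℝ ι => covHSSq (localization ν p.1 p.2) :=
  continuous_finsetSum _ fun _ _ => continuous_finsetSum _ fun _ _ =>
    (hν.continuous_covariance_localization (by fun_prop) (by fun_prop)).pow 2

end Localization

section Generator

open Filter Topology

variable {ι : Type*} [Fintype ι] [DecidableEq ι]

/-- At the point `(t, y)` the function `F` is differentiable in time, twice differentiable along the
coordinate lines with gradient `g`, and `(∂ₜ + m · ∇ + Δ / 2) F = c`. This is the generator of the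
process `dyₜ = m dt + dBₜ`, which drives stochastic localization when `m` is the mean of the
localized measure. -/
def HasGeneratorAt (m : ι → ℝ) (F : ℝ → EuclideanSpace ℝ ι → ℝ) (t : ℝ)
    (y : EuclideanSpace ℝ ι) (g : ι → ℝ) (c : ℝ) : Prop :=
  ∃ (Ft : ℝ) (g' : ι → ℝ → ℝ) (q : ι → ℝ), HasDerivAt (fun s => F s y) Ft t ∧
    (∀ i s, HasDerivAt (fun s => F t (y + s • EuclideanSpace.single i 1)) (g' i s) s) ∧
    (∀ i, g' i 0 = g i) ∧ (∀ i, HasDerivAt (g' i) (q i) 0) ∧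
    Ft + ∑ i, m i * g i + (∑ i, q i) / 2 = c

namespace HasGeneratorAt

variable {m g g₁ : ι → ℝ} {F G : ℝ → EuclideanSpace ℝ ι → ℝ} {t c d : ℝ}
  {y : EuclideanSpace ℝ ι}

theorem add (hF : HasGeneratorAt m F t y g c) (hG : HasGeneratorAt m G t y g₁ d) :
    HasGeneratorAt m (fun t y => F t y + G t y) t y (fun i => g i + g₁ i) (c + d) := by
  obtain ⟨Ft, g', q, hFt, hF', hg, hq, rfl⟩ := hF
  obtain ⟨Gt, g₁', q₁, hGt, hG', hg₁, hq₁, rfl⟩ := hG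
  refine ⟨Ft + Gt, fun i s => g' i s + g₁' i s, fun i => q i + q₁ i, hFt.add hGt,
    fun i s => (hF' i s).add (hG' i s), fun i => by simp only [hg, hg₁],
    fun i => (hq i).add (hq₁ i), ?_⟩
  simp only [mul_add, Finset.sum_add_distrib]
  ring

theorem mul (hF : HasGeneratorAt m F t y g c) (hG : HasGeneratorAt m G t y g₁ d) :
    HasGeneratorAt m (fun t y => F t y * G t y) t y (fun i => g i * G t y + F t y * g₁ i)
      (c * G t y + F t y * d + ∑ i, g i * g₁ i) := by
  obtain ⟨Ft, g', q, hFt, hF', hg, hq, rfl⟩ := hF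
  obtain ⟨Gt, g₁', q₁, hGt, hG', hg₁, hq₁, rfl⟩ := hG
  refine ⟨Ft * G t y + F t y * Gt,
    fun i s => g' i s * G t (y + s • EuclideanSpace.single i 1) +
      F t (y + s • EuclideanSpace.single i 1) * g₁' i s,
    fun i => q i * G t y + g i * g₁ i + (g i * g₁ i + F t y * q₁ i), hFt.mul hGt,
    fun i s => (hF' i s).mul (hG' i s), fun i => by simp [hg, hg₁], fun i => ?_, ?_⟩
  · refine (((hq i).mul (hG' i 0)).add ((hF' i 0).mul (hq₁ i))).congr_deriv ?_
    simp [hg, hg₁]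
  · have hdrift : ∑ i, m i * (g i * G t y + F t y * g₁ i) =
        (∑ i, m i * g i) * G t y + F t y * ∑ i, m i * g₁ i := by
      rw [Finset.sum_mul, Finset.mul_sum, ← Finset.sum_add_distrib]
      exact Finset.sum_congr rfl fun i _ => by ring
    have hlaplacian : ∑ i, (q i * G t y + g i * g₁ i + (g i * g₁ i + F t y * q₁ i)) =
        (∑ i, q i) * G t y + 2 * ∑ i, g i * g₁ i + F t y * ∑ i, q₁ i := by
      rw [Finset.sum_mul, Finset.mul_sum, Finset.mul_sum, ← Finset.sum_add_distrib,
        ← Finset.sum_add_distrib]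
      exact Finset.sum_congr rfl fun i _ => by ring
    rw [hdrift, hlaplacian]
    ring

theorem time {u : ℝ → ℝ} {u' : ℝ} (hu : HasDerivAt u u' t) :
    HasGeneratorAt m (fun t _ => u t) t y (fun _ => 0) u' :=
  ⟨u', fun _ _ => 0, fun _ => 0, hu, fun _ _ => hasDerivAt_const _ _, fun _ => rfl,
    fun _ => hasDerivAt_const _ _, by simp⟩

theorem time_mul {u : ℝ → ℝ} {u' : ℝ} (hu : HasDerivAt u u' t)
    (hF : HasGeneratorAt m F t y g c) :
    HasGeneratorAt m (fun t y => u t * F t y) t y (fun i => u t * g i)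
      (u' * F t y + u t * c) := by
  simpa using (time hu).mul hF

theorem sub (hF : HasGeneratorAt m F t y g c) (hG : HasGeneratorAt m G t y g₁ d) :
    HasGeneratorAt m (fun t y => F t y - G t y) t y (fun i => g i - g₁ i) (c - d) := by
  simpa [sub_eq_add_neg] using hF.add (time_mul (hasDerivAt_const t (-1)) hG)

theorem sum {κ : Type*} {F : κ → ℝ → EuclideanSpace ℝ ι → ℝ} {g : κ → ι → ℝ} {c : κ → ℝ}
    (s : Finset κ) (hF : ∀ j, HasGeneratorAt m (F j) t y (g j) (c j)) :
    HasGeneratorAt m (fun t y => ∑ j ∈ s, F j t y) t y (fun i => ∑ j ∈ s, g j i)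
      (∑ j ∈ s, c j) := by
  classical
  induction s using Finset.induction_on with
  | empty => simpa using time (m := m) (y := y) (hasDerivAt_const t (0 : ℝ))
  | insert j s hj ih => simpa only [Finset.sum_insert hj] using (hF j).add ih

theorem norm_sq : HasGeneratorAt m (fun _ y => ‖y‖ ^ 2) t y (fun i => 2 * y i)
    (2 * ∑ i, m i * y i + Fintype.card ι) := by
  have hline : ∀ i (s : ℝ),
      ‖y + s • EuclideanSpace.single i 1‖ ^ 2 = ‖y‖ ^ 2 + s * (2 * y i) + s ^ 2 := fun i s => by
    rw [norm_add_sq_real, inner_smul_right, EuclideanSpace.inner_single_right, norm_smul, mul_pow]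
    simp
    ring
  refine ⟨0, fun i s => 2 * y i + 2 * s, fun _ => 2, hasDerivAt_const _ _, fun i s => ?_,
    fun i => by simp, fun i => ?_, ?_⟩
  · simp only [hline]
    refine (((hasDerivAt_id s).mul_const (2 * y i)).const_add (‖y‖ ^ 2)).add
      (hasDerivAt_pow 2 s) |>.congr_deriv ?_
    simp
  · simpa using ((hasDerivAt_id (0 : ℝ)).const_mul 2).const_add (2 * y i)
  · simp only [mul_left_comm (m _) 2, ← Finset.mul_sum, Finset.sum_const, Finset.card_univ,
      nsmul_eq_mul]
    ring

end HasGeneratorAt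

theorem nonpos_of_hasDerivAt_of_isLocalMaxOn_Ici {f : ℝ → ℝ} {f' t : ℝ} (hf : HasDerivAt f f' t)
    (hmax : IsLocalMaxOn f (Set.Ici t) t) : f' ≤ 0 := by
  have hone : (1 : ℝ) ∈ posTangentConeAt (Set.Ici t) t :=
    mem_posTangentConeAt_of_segment_subset ((convex_Ici t).segment_subset Set.self_mem_Ici
      (by simp))
  simpa using hmax.hasFDerivWithinAt_nonpos hf.hasDerivWithinAt.hasFDerivWithinAt hone

theorem nonpos_of_hasDerivAt_hasDerivAt_of_isLocalMax {f f' : ℝ → ℝ} {q x : ℝ}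
    (hf : ∀ s, HasDerivAt f (f' s) s) (hf' : HasDerivAt f' q x) (hmax : IsLocalMax f x) :
    q ≤ 0 := by
  by_contra! hq
  have hderiv : deriv f = f' := funext fun s => (hf s).deriv
  have hmin : IsLocalMin f x := isLocalMin_of_deriv_deriv_pos
    (by rwa [hderiv, hf'.deriv]) hmax.deriv_eq_zero (hf x).continuousAt
  have hconst : f =ᶠ[𝓝 x] fun _ => f x := by
    filter_upwards [hmin, hmax] with s h h' using le_antisymm h' h
  refine hq.ne' (hf'.unique ((hasDerivAt_const x (0 : ℝ)).congr_of_eventuallyEq ?_))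
  simpa [hderiv] using hconst.deriv

theorem HasGeneratorAt.nonpos_of_isLocalMaxOn {m g : ι → ℝ} {F : ℝ → EuclideanSpace ℝ ι → ℝ}
    {t c : ℝ} {y : EuclideanSpace ℝ ι} (hF : HasGeneratorAt m F t y g c)
    (hmax : IsLocalMaxOn (fun p : ℝ × EuclideanSpace ℝ ι => F p.1 p.2) {p | t ≤ p.1} (t, y)) :
    c ≤ 0 := by
  obtain ⟨Ft, g', q, hFt, hF', hg, hq, rfl⟩ := hF
  have hcomp {γ : ℝ → ℝ × EuclideanSpace ℝ ι} {s : Set ℝ} {x : ℝ} (hγ : Continuous γ)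
      (hx : γ x = (t, y)) (hs : Set.MapsTo γ s {p | t ≤ p.1}) :
      IsLocalMaxOn (fun u => F (γ u).1 (γ u).2) s x := by
    have htendsto := (hγ.continuousWithinAt (x := x)).tendsto_nhdsWithin hs
    rw [hx] at htendsto
    simpa only [IsLocalMaxOn, IsMaxFilter, hx] using htendsto.eventually hmax
  have hFt_nonpos : Ft ≤ 0 := nonpos_of_hasDerivAt_of_isLocalMaxOn_Ici hFt
    (hcomp (γ := fun s => (s, y)) (by fun_prop) rfl fun s hs => hs)
  have hline : ∀ i, IsLocalMax (fun s : ℝ => F t (y + s • EuclideanSpace.single i 1)) 0 :=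
    fun i => isLocalMaxOn_univ_iff.mp
      (hcomp (γ := fun s => (t, y + s • EuclideanSpace.single i 1)) (by fun_prop) (by simp)
        fun s _ => le_refl t)
  have hg_zero : ∀ i, g i = 0 := fun i => by rw [← hg, (hline i).hasDerivAt_eq_zero (hF' i 0)]
  have hq_nonpos : ∑ i, q i ≤ 0 := Finset.sum_nonpos fun i _ =>
    nonpos_of_hasDerivAt_hasDerivAt_of_isLocalMax (hF' i) (hq i) (hline i)
  simp only [hg_zero, mul_zero, Finset.sum_const_zero]
  linarith

end Generator

/-! ### The maximum principle -/

section MaximumPrinciple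

open Topology

variable {ι : Type*} [Fintype ι] [DecidableEq ι] {m : ι → ℝ}

/-- `(∂ₜ + m · ∇ + Δ / 2) W ≥ b` at `p` in the sense of barriers: some test function touching `W`
from below at `p` satisfies the inequality. -/
def GeneratorGEAt (m : ι → ℝ) (W : ℝ × EuclideanSpace ℝ ι → ℝ) (p : ℝ × EuclideanSpace ℝ ι)
    (b : ℝ) : Prop :=
  ∃ (F : ℝ → EuclideanSpace ℝ ι → ℝ) (g : ι → ℝ) (c : ℝ), HasGeneratorAt m F p.1 p.2 g c ∧
    F p.1 p.2 = W p ∧ (∀ q, F q.1 q.2 ≤ W q) ∧ b ≤ c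

theorem hasDerivAt_exp_const_mul (a t : ℝ) :
    HasDerivAt (fun s => exp (a * s)) (a * exp (a * t)) t := by
  simpa [mul_comm] using ((hasDerivAt_id t).const_mul a).exp

theorem HasGeneratorAt.exists_exp_mul_one_add_norm_sq {r : ℝ} (hr : 0 ≤ r) (t : ℝ)
    {y : EuclideanSpace ℝ ι} (hm : ∑ i, m i * y i ≤ r * ‖y‖) :
    ∃ g c, c < 0 ∧ HasGeneratorAt m
      (fun t y => exp (-(r + Fintype.card ι + 1) * t) * (1 + ‖y‖ ^ 2)) t y g c := by
  set K := r + Fintype.card ι + 1 with hK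
  refine ⟨_, _, ?_, .time_mul (hasDerivAt_exp_const_mul (-K) t)
    ((HasGeneratorAt.time (hasDerivAt_const t (1 : ℝ))).add .norm_sq)⟩
  have hcross : 2 * (r * ‖y‖) ≤ r * (1 + ‖y‖ ^ 2) := by
    nlinarith [mul_nonneg hr (sq_nonneg (‖y‖ - 1))]
  have hcard : (0 : ℝ) ≤ Fintype.card ι * ‖y‖ ^ 2 := by positivity
  calc -K * exp (-K * t) * (1 + ‖y‖ ^ 2) +
        exp (-K * t) * (0 + (2 * ∑ i, m i * y i + Fintype.card ι))
      = -(exp (-K * t) * (K * (1 + ‖y‖ ^ 2) - 2 * ∑ i, m i * y i - Fintype.card ι)) := by ring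
    _ < 0 := neg_lt_zero.mpr (mul_pos (exp_pos _) (by rw [hK]; nlinarith [sq_nonneg ‖y‖]))

theorem exists_isMaxOn_of_le_sub_norm_sq {E : Type*} [NormedAddCommGroup E] [ProperSpace E]
    {D : Set (ℝ × E)} (hD : IsClosed D) {a T : ℝ} (hDT : ∀ p ∈ D, p.1 ∈ Set.Icc a T)
    {Φ : ℝ × E → ℝ} (hΦ : Continuous Φ) {B ε : ℝ} (hε : 0 < ε)
    (hΦB : ∀ p ∈ D, Φ p ≤ B - ε * ‖p.2‖ ^ 2) {p₀ : ℝ × E} (hp₀ : p₀ ∈ D) :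
    ∃ p ∈ D, IsMaxOn Φ D p := by
  set ρ := √((B - Φ p₀) / ε)
  refine hΦ.continuousOn.exists_isMaxOn' hD hp₀ ?_
  have hcompact : IsCompact (Set.Icc a T ×ˢ Metric.closedBall (0 : E) ρ) :=
    isCompact_Icc.prod (isCompact_closedBall _ _)
  filter_upwards [Filter.mem_inf_of_left hcompact.compl_mem_cocompact,
    Filter.mem_inf_of_right (Filter.mem_principal_self D)] with p hp hpD
  have hρ : ρ < ‖p.2‖ := by
    by_contra! h
    exact hp ⟨hDT p hpD, mem_closedBall_zero_iff.mpr h⟩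
  have hsq := (sqrt_lt' ((sqrt_nonneg _).trans_lt hρ)).mp hρ
  rw [div_lt_iff₀ hε] at hsq
  linarith [hΦB p hpD]

theorem GeneratorGEAt.not_isLocalMaxOn_exp_mul_sub {r l η : ℝ} (hr : 0 ≤ r) (hη : 0 < η)
    {W : ℝ × EuclideanSpace ℝ ι → ℝ} {p : ℝ × EuclideanSpace ℝ ι}
    (hW : GeneratorGEAt m W p (-l * W p)) (hm : ∑ i, m i * p.2 i ≤ r * ‖p.2‖) :
    ¬ IsLocalMaxOn (fun q => exp (l * q.1) * W q -
      η * (exp (-(r + Fintype.card ι + 1) * q.1) * (1 + ‖q.2‖ ^ 2))) {q | p.1 ≤ q.1} p := by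
  intro hmax
  obtain ⟨F, g, c, hF, hFp, hFW, hc⟩ := hW
  obtain ⟨g', c', hc', hP⟩ := HasGeneratorAt.exists_exp_mul_one_add_norm_sq hr p.1 hm
  have hgen := (HasGeneratorAt.time_mul (hasDerivAt_exp_const_mul l p.1) hF).sub
    (.time_mul (hasDerivAt_const p.1 η) hP)
  have hnonpos := hgen.nonpos_of_isLocalMaxOn (hmax.mono fun q hq => ?_)
  · rw [hFp] at hnonpos
    nlinarith [mul_le_mul_of_nonneg_left hc (exp_pos (l * p.1)).le, mul_pos_of_neg_of_neg
      (neg_lt_zero.mpr hη) hc']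
  · simp only [hFp]
    refine (sub_le_sub_right (mul_le_mul_of_nonneg_left (hFW q) (exp_pos _).le) _).trans hq

theorem nonpos_of_generatorGEAt {D : Set (ℝ × EuclideanSpace ℝ ι)} (hD : IsClosed D) {T : ℝ}
    (hDT : ∀ p ∈ D, p.1 ∈ Set.Icc 0 T) {W : ℝ × EuclideanSpace ℝ ι → ℝ} (hW : Continuous W)
    {B : ℝ} (hWB : ∀ p ∈ D, W p ≤ B) {r l : ℝ} (hr : 0 ≤ r) (hl : 0 ≤ l)
    (hnhds : ∀ p ∈ D, 0 < W p → D ∈ 𝓝[{q | p.1 ≤ q.1}] p)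
    (hgen : ∀ p ∈ D, 0 < W p → ∃ m : ι → ℝ, ∑ i, m i * p.2 i ≤ r * ‖p.2‖ ∧
      GeneratorGEAt m W p (-l * W p)) : ∀ p ∈ D, W p ≤ 0 := by
  intro p₀ hp₀
  by_contra! hWp₀
  have hB : 0 < B := hWp₀.trans_le (hWB p₀ hp₀)
  set K := r + Fintype.card ι + 1
  have hK0 : 0 ≤ K := by positivity
  set P : ℝ × EuclideanSpace ℝ ι → ℝ := fun p => exp (-K * p.1) * (1 + ‖p.2‖ ^ 2) with hP
  have hP_pos : ∀ p, 0 < P p := fun p => by positivity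
  set η := exp (l * p₀.1) * W p₀ / (2 * P p₀) with hη
  have hη_pos : 0 < η := div_pos (mul_pos (exp_pos _) hWp₀) (mul_pos two_pos (hP_pos p₀))
  set Φ : ℝ × EuclideanSpace ℝ ι → ℝ := fun p => exp (l * p.1) * W p - η * P p with hΦ
  have hΦp₀ : 0 < Φ p₀ := by
    have : η * P p₀ = exp (l * p₀.1) * W p₀ / 2 := by
      rw [hη]
      field_simp [(hP_pos p₀).ne']
    simp only [hΦ, this]
    linarith [mul_pos (exp_pos (l * p₀.1)) hWp₀]
  have hΦ_le : ∀ p ∈ D, Φ p ≤ exp (l * T) * B - η * exp (-K * T) * ‖p.2‖ ^ 2 := fun p hp => by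
    have hfirst : exp (l * p.1) * W p ≤ exp (l * T) * B :=
      (mul_le_mul_of_nonneg_left (hWB p hp) (exp_pos _).le).trans
        (by gcongr; exact (hDT p hp).2)
    have hpenalty : exp (-K * T) * ‖p.2‖ ^ 2 ≤ P p := by
      have : -K * T ≤ -K * p.1 := mul_le_mul_of_nonpos_left (hDT p hp).2 (neg_nonpos.mpr hK0)
      simp only [hP]
      gcongr
      linarith
    simp only [hΦ, mul_assoc]
    gcongr
  obtain ⟨p, hp, hmax⟩ := exists_isMaxOn_of_le_sub_norm_sq hD hDT (by fun_prop)
    (mul_pos hη_pos (exp_pos _)) hΦ_le hp₀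
  have hWp : 0 < W p := by
    have : 0 < Φ p := hΦp₀.trans_le (hmax hp₀)
    have : 0 < exp (l * p.1) * W p := by linarith [mul_pos hη_pos (hP_pos p)]
    exact (mul_pos_iff_of_pos_left (exp_pos _)).mp this
  obtain ⟨m, hm, hgenW⟩ := hgen p hp hWp
  exact hgenW.not_isLocalMaxOn_exp_mul_sub hr hη_pos hm
    (Filter.mem_of_superset (hnhds p hp hWp) fun q hq => hmax hq)

end MaximumPrinciple

section LocalizationGenerator

variable {ι : Type*} [Fintype ι] {ν : Measure (EuclideanSpace ℝ ι)}
  {h k φ : EuclideanSpace ℝ ι → ℝ}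

theorem localization_eq_tilted_add_mul_norm_sq (t : ℝ) (y : EuclideanSpace ℝ ι) :
    localization ν t y = ν.tilted fun x => ⟪y, x⟫ + t * (-‖x‖ ^ 2 / 2) := by
  rw [localization]
  congr 1 with x
  rw [tiltFn]
  ring

theorem localization_add_smul_single [DecidableEq ι] (t : ℝ) (y : EuclideanSpace ℝ ι) (i : ι)
    (s : ℝ) :
    localization ν t (y + s • EuclideanSpace.single i 1) =
      ν.tilted fun x => tiltFn t y x + s * x i := by
  rw [localization]
  congr 1 with x
  rw [tiltFn, tiltFn, inner_add_left, real_inner_smul_left, EuclideanSpace.inner_single_left]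
  simp
  ring

/-- The mean of the localized measure, which is the drift of the tilting process. -/
def localizationMean (ν : Measure (EuclideanSpace ℝ ι)) (t : ℝ) (y : EuclideanSpace ℝ ι) (i : ι) :
    ℝ :=
  ∫ x, x i ∂localization ν t y

variable [IsFiniteMeasure ν] [NeZero ν]

theorem IsCompactlySupported.sum_localizationMean_mul_le (hν : IsCompactlySupported ν) {r : ℝ}
    (hr : ∀ᵐ x ∂ν, ‖x‖ ≤ r) (t : ℝ) (y : EuclideanSpace ℝ ι) :
    ∑ i, localizationMean ν t y i * y i ≤ r * ‖y‖ := by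
  have hprob := isProbabilityMeasure_localization hν t y
  have hsupp := isCompactlySupported_localization hν t y
  calc ∑ i, localizationMean ν t y i * y i = ∫ x, ⟪x, y⟫ ∂localization ν t y := by
        simp only [localizationMean, ← integral_mul_const]
        rw [← integral_finsetSum _ fun i _ => hsupp.integrable (by fun_prop)]
        exact integral_congr_ae (.of_forall fun x => by
          simp [PiLp.inner_apply, mul_comm])
    _ ≤ ∫ _, r * ‖y‖ ∂localization ν t y := by
        refine integral_mono_ae (hsupp.integrable (by fun_prop)) (integrable_const _) ?_
        filter_upwards [(tilted_absolutelyContinuous ν (tiltFn t y)).ae_le hr] with x hx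
        exact (real_inner_le_norm x y).trans (by gcongr)
    _ = r * ‖y‖ := by simp

theorem IsCompactlySupported.hasDerivAt_integral_localization_time (hν : IsCompactlySupported ν)
    (hh : Continuous h) (t : ℝ) (y : EuclideanSpace ℝ ι) :
    HasDerivAt (fun s => ∫ x, h x ∂localization ν s y)
      (-(∑ i, cov[fun x => x i * x i, h; localization ν t y]) / 2) t := by
  have hprob := isProbabilityMeasure_localization hν t y
  have hsupp := isCompactlySupported_localization hν t y
  have hnorm : cov[h, fun x => -‖x‖ ^ 2 / 2; localization ν t y] =
      -(∑ i, cov[fun x => x i * x i, h; localization ν t y]) / 2 := by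
    have hsum : (fun x : EuclideanSpace ℝ ι => -‖x‖ ^ 2 / 2) =
        fun x => -2⁻¹ * ∑ i, x i * x i := by
      ext x
      simp only [EuclideanSpace.real_norm_sq_eq, ← sq]
      ring
    rw [hsum, covariance_const_mul_right,
      covariance_fun_sum_right (fun i => hsupp.memLp (by fun_prop) 2) (hsupp.memLp hh 2)]
    simp only [covariance_comm h]
    ring
  rw [← hnorm]
  simp only [localization_eq_tilted_add_mul_norm_sq]
  exact hν.hasDerivAt_integral_tilted hh (by fun_prop) (by fun_prop) t

variable [DecidableEq ι]

theorem IsCompactlySupported.hasDerivAt_integral_localization (hν : IsCompactlySupported ν)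
    (hh : Continuous h) (t : ℝ) (y : EuclideanSpace ℝ ι) (i : ι) (s : ℝ) :
    HasDerivAt (fun s => ∫ x, h x ∂localization ν t (y + s • EuclideanSpace.single i 1))
      cov[h, fun x => x i; localization ν t (y + s • EuclideanSpace.single i 1)] s := by
  simp only [localization_add_smul_single]
  exact hν.hasDerivAt_integral_tilted hh (by fun_prop) (by fun_prop) s

theorem IsCompactlySupported.hasDerivAt_covariance_localization (hν : IsCompactlySupported ν)
    (hh : Continuous h) (hk : Continuous k) (t : ℝ) (y : EuclideanSpace ℝ ι) (i : ι) (s : ℝ) :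
    HasDerivAt (fun s => cov[h, k; localization ν t (y + s • EuclideanSpace.single i 1)])
      (thirdCentralMoment h k (fun x => x i)
        (localization ν t (y + s • EuclideanSpace.single i 1))) s := by
  simp only [localization_add_smul_single]
  exact hν.hasDerivAt_covariance_tilted hh hk (by fun_prop) (by fun_prop) s

theorem IsCompactlySupported.hasGeneratorAt_integral (hν : IsCompactlySupported ν)
    (hh : Continuous h) (t : ℝ) (y : EuclideanSpace ℝ ι) :
    HasGeneratorAt (localizationMean ν t y) (fun t y => ∫ x, h x ∂localization ν t y) t y
      (fun i => cov[h, fun x => x i; localization ν t y]) 0 := by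
  have hprob := isProbabilityMeasure_localization hν t y
  have hsupp := isCompactlySupported_localization hν t y
  refine ⟨_, _, fun i => cov[fun x => x i * x i, h; localization ν t y] -
      2 * (localizationMean ν t y i * cov[h, fun x => x i; localization ν t y]),
    hν.hasDerivAt_integral_localization_time hh t y,
    fun i s => hν.hasDerivAt_integral_localization hh t y i s, fun i => by simp, fun i => ?_, ?_⟩
  · refine (hν.hasDerivAt_covariance_localization hh (by fun_prop) t y i 0).congr_deriv ?_
    have hcomm : thirdCentralMoment h (fun x => x i) (fun x => x i) (localization ν t y) =
        thirdCentralMoment (fun x => x i) (fun x => x i) h (localization ν t y) := by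
      simp only [thirdCentralMoment, mul_left_comm, mul_comm]
    rw [zero_smul, add_zero, hcomm,
      thirdCentralMoment_eq_covariance_sub hsupp (by fun_prop) (by fun_prop) hh,
      covariance_comm (fun x => x i) h]
    simp only [localizationMean]
    ring
  · rw [Finset.sum_sub_distrib, ← Finset.mul_sum]
    ring

theorem IsCompactlySupported.hasGeneratorAt_covariance (hν : IsCompactlySupported ν)
    (hh : Continuous h) (hk : Continuous k) (t : ℝ) (y : EuclideanSpace ℝ ι) :
    HasGeneratorAt (localizationMean ν t y) (fun t y => cov[h, k; localization ν t y]) t y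
      (fun i => thirdCentralMoment h k (fun x => x i) (localization ν t y))
      (-∑ i, cov[h, fun x => x i; localization ν t y] *
        cov[k, fun x => x i; localization ν t y]) := by
  have hprob := isProbabilityMeasure_localization hν
  have hsupp := isCompactlySupported_localization hν
  have hthird : ∀ i, thirdCentralMoment h k (fun x => x i) (localization ν t y) = _ := fun i =>
    thirdCentralMoment_eq_covariance_sub (hsupp t y) hh hk (by fun_prop)
  simp only [(hsupp _ _).covariance_eq_sub hh hk, hthird]
  simpa using (hν.hasGeneratorAt_integral (hh.fun_mul hk) t y).sub
    ((hν.hasGeneratorAt_integral hh t y).mul (hν.hasGeneratorAt_integral hk t y))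

theorem IsCompactlySupported.exists_hasGeneratorAt_variance (hν : IsCompactlySupported ν)
    (hφ : Continuous φ) (t : ℝ) (y : EuclideanSpace ℝ ι) :
    ∃ g c, HasGeneratorAt (localizationMean ν t y) (fun t y => Var[φ; localization ν t y]) t y g c ∧
      -(√(covHSSq (localization ν t y)) * Var[φ; localization ν t y]) ≤ c := by
  have hprob := isProbabilityMeasure_localization hν t y
  have hsupp := isCompactlySupported_localization hν t y
  refine ⟨_, _, by simpa only [covariance_self hφ.aemeasurable] using
    hν.hasGeneratorAt_covariance hφ hφ t y, neg_le_neg ?_⟩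
  simpa only [← sq, covariance_comm φ, covHSSq] using sum_sq_covariance_le
    (X := fun i (x : EuclideanSpace ℝ ι) => x i) (fun i => hsupp.memLp (by fun_prop) 2)
    (hsupp.memLp hφ 2)

theorem IsLogConcaveMeasure.exists_hasGeneratorAt_covHSSq (hlc : IsLogConcaveMeasure ν)
    (hν : IsCompactlySupported ν) {t : ℝ} (ht : 0 ≤ t) (y : EuclideanSpace ℝ ι) :
    ∃ g c, HasGeneratorAt (localizationMean ν t y) (fun t y => covHSSq (localization ν t y)) t y
      g c ∧ c ≤ reverseHolderConst * √(covHSSq (localization ν t y)) ^ 3 := by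
  have hprob := isProbabilityMeasure_localization hν t y
  have hsupp := isCompactlySupported_localization hν t y
  have hcov := fun i j => hν.hasGeneratorAt_covariance (h := fun x => x i) (k := fun x => x j)
    (by fun_prop) (by fun_prop) t y
  simp only [covHSSq, sq (cov[_, _; _])]
  refine ⟨_, _, .sum _ fun i => .sum _ fun j => (hcov i j).mul (hcov i j), ?_⟩
  have hdissipation := sum_covariance_mul_covariance_mul_covariance_nonneg
    (X := fun i (x : EuclideanSpace ℝ ι) => x i) fun i => hsupp.memLp (by fun_prop) 2
  have hthird := ((hlc.isStronglyLogConcaveMeasure_localization t y).isLogConcaveMeasure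
    ht).sum_sq_thirdCentralMoment_le hsupp
  simp only [covHSSq, sq (cov[_, _; _]), sq (thirdCentralMoment _ _ _ _)] at hthird
  refine le_trans (le_of_eq ?_) ((add_le_of_nonpos_left
    (mul_nonpos_of_nonpos_of_nonneg (by norm_num : (-2 : ℝ) ≤ 0) hdissipation)).trans hthird)
  simp only [Finset.mul_sum, ← Finset.sum_add_distrib]
  refine Finset.sum_congr rfl fun i _ => Finset.sum_congr rfl fun j _ => ?_
  simp only [Finset.sum_add_distrib, ← Finset.mul_sum]
  ring

end LocalizationGenerator

/-! ### The barrier -/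

section Barrier

/-- The constant in the barrier: the least one for which the dissipation of the barrier along
stochastic localization dominates the growth of the covariance. -/
def barrierConst : ℝ := reverseHolderConst / 2 + 1

theorem reverseHolderConst_nonneg : 0 ≤ reverseHolderConst := by
  unfold reverseHolderConst
  positivity

theorem barrierConst_pos : 0 < barrierConst := by
  unfold barrierConst
  linarith [reverseHolderConst_nonneg]

/-- The barrier for the variance of a `1`-Lipschitz function at time `t`, when the covariance matrix
has Hilbert–Schmidt norm `R`. -/
def barrier (R t : ℝ) : ℝ := 16 * barrierConst * (R - barrierConst * t * R ^ 2)

variable {R t : ℝ}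

theorem le_barrier (hR : 0 ≤ R) (htR : barrierConst * (t * R) ≤ 1 / 2) :
    8 * barrierConst * R ≤ barrier R t := by
  have : barrierConst * (t * R) * (barrierConst * R) ≤ 1 / 2 * (barrierConst * R) :=
    mul_le_mul_of_nonneg_right htR (mul_nonneg barrierConst_pos.le hR)
  unfold barrier
  linarith

/-- The coefficient of `R ^ 2` in the tangent to the barrier, as a concave function of `R ^ 2`, at
`R = R₀`. -/
def barrierSlope (R₀ t : ℝ) : ℝ := 16 * barrierConst * (1 / (2 * R₀) - barrierConst * t)

theorem hasDerivAt_barrierSlope (R₀ t : ℝ) :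
    HasDerivAt (barrierSlope R₀) (-(16 * barrierConst ^ 2)) t := by
  refine ((((hasDerivAt_id t).const_mul barrierConst).const_sub (1 / (2 * R₀))).const_mul
    (16 * barrierConst)).congr_deriv ?_
  ring

theorem barrier_le_tangent {R₀ : ℝ} (hR₀ : 0 < R₀) (R t : ℝ) :
    barrier R t ≤ barrierSlope R₀ t * R ^ 2 + 8 * barrierConst * R₀ := by
  have htangent : R ≤ R ^ 2 / (2 * R₀) + R₀ / 2 := by
    rw [div_add_div _ _ (by positivity) two_ne_zero, le_div_iff₀ (by positivity)]
    nlinarith [sq_nonneg (R - R₀)]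
  have := mul_le_mul_of_nonneg_left htangent (mul_pos (by norm_num : (0 : ℝ) < 16)
    barrierConst_pos).le
  calc barrier R t = 16 * barrierConst * R - 16 * barrierConst ^ 2 * t * R ^ 2 := by
        unfold barrier
        ring
    _ ≤ 16 * barrierConst * (R ^ 2 / (2 * R₀) + R₀ / 2) -
        16 * barrierConst ^ 2 * t * R ^ 2 := by gcongr
    _ = _ := by
        unfold barrierSlope
        ring

theorem barrier_eq_tangent (hR : R ≠ 0) (t : ℝ) :
    barrier R t = barrierSlope R t * R ^ 2 + 8 * barrierConst * R := by
  unfold barrier barrierSlope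
  field_simp
  ring

theorem mul_barrier_le_dissipation (hR : 0 < R) (ht : 0 ≤ t)
    (htR : barrierConst * (t * R) ≤ 1 / 2) {c : ℝ} (hc : c ≤ reverseHolderConst * R ^ 3) :
    R * barrier R t ≤ 16 * barrierConst ^ 2 * R ^ 2 - barrierSlope R t * c := by
  have hκ := barrierConst_pos
  have hslope_nonneg : 0 ≤ barrierSlope R t := by
    have : barrierSlope R t = 16 * barrierConst * ((1 / 2 - barrierConst * (t * R)) / R) := by
      unfold barrierSlope
      field_simp
    rw [this]
    have := sub_nonneg.mpr htR
    positivity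
  have hslope_le : barrierSlope R t ≤ 8 * barrierConst / R := by
    have : barrierSlope R t = 8 * barrierConst / R - 16 * barrierConst ^ 2 * t := by
      unfold barrierSlope
      field_simp
      ring
    linarith [show 0 ≤ 16 * barrierConst ^ 2 * t by positivity]
  have hgrowth : barrierSlope R t * c ≤ 16 * barrierConst * (barrierConst - 1) * R ^ 2 := calc
    barrierSlope R t * c ≤ 8 * barrierConst / R * (reverseHolderConst * R ^ 3) := by
      refine (mul_le_mul_of_nonneg_left hc hslope_nonneg).trans ?_
      have := reverseHolderConst_nonneg
      gcongr
    _ = 16 * barrierConst * (barrierConst - 1) * R ^ 2 := by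
      unfold barrierConst
      field_simp
      ring
  have hbarrier : R * barrier R t =
      16 * barrierConst * R ^ 2 - 16 * barrierConst ^ 2 * t * R ^ 3 := by
    unfold barrier
    ring
  linarith [show 0 ≤ 16 * barrierConst ^ 2 * t * R ^ 3 by positivity]

end Barrier

section LocalizedVariance

variable {ι : Type*} [Fintype ι] {ν : Measure (EuclideanSpace ℝ ι)} {φ : EuclideanSpace ℝ ι → ℝ}
  {e : ℝ}

/-- The Hilbert–Schmidt norm of the covariance matrix of the localized measure, regularized by
`e > 0` so that it is smooth. -/
def covScale (ν : Measure (EuclideanSpace ℝ ι)) (e : ℝ) (p : ℝ × EuclideanSpace ℝ ι) : ℝ :=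
  √(covHSSq (localization ν p.1 p.2) + e)

theorem sqrt_le_covScale (ν : Measure (EuclideanSpace ℝ ι)) (e : ℝ) (p : ℝ × EuclideanSpace ℝ ι) :
    √e ≤ covScale ν e p :=
  sqrt_le_sqrt (le_add_of_nonneg_left (covHSSq_nonneg _))

theorem covScale_pos (he : 0 < e) (p : ℝ × EuclideanSpace ℝ ι) : 0 < covScale ν e p :=
  (sqrt_pos.mpr he).trans_le (sqrt_le_covScale ν e p)

theorem covScale_sq (he : 0 < e) (p : ℝ × EuclideanSpace ℝ ι) :
    covScale ν e p ^ 2 = covHSSq (localization ν p.1 p.2) + e :=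
  sq_sqrt (add_nonneg (covHSSq_nonneg _) he.le)

theorem sqrt_covHSSq_le_covScale (he : 0 < e) (p : ℝ × EuclideanSpace ℝ ι) :
    √(covHSSq (localization ν p.1 p.2)) ≤ covScale ν e p :=
  sqrt_le_sqrt (le_add_of_nonneg_right he.le)

variable [IsFiniteMeasure ν] [NeZero ν]

theorem IsCompactlySupported.continuous_covScale (hν : IsCompactlySupported ν) :
    Continuous (covScale ν e) :=
  (hν.continuous_covHSSq_localization.add_const e).sqrt

theorem IsCompactlySupported.exists_variance_localization_le (hν : IsCompactlySupported ν)
    (hφ : Continuous φ) : ∃ B, ∀ t y, Var[φ; localization ν t y] ≤ B := by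
  obtain ⟨K, hK, hνK⟩ := id hν
  obtain ⟨B, hB⟩ := hK.exists_bound_of_continuousOn hφ.continuousOn
  refine ⟨((B - -B) / 2) ^ 2, fun t y => ?_⟩
  have := isProbabilityMeasure_localization hν t y
  refine variance_le_sq_of_bounded ?_ hφ.aemeasurable
  filter_upwards [(tilted_absolutelyContinuous ν (tiltFn t y)).ae_le hνK] with x hx
  exact abs_le.mp (hB x hx)

theorem IsCompactlySupported.exists_covScale_le (hν : IsCompactlySupported ν) (e : ℝ) :
    ∃ B, ∀ p, covScale ν e p ≤ B := by
  have hvar : ∀ i : ι, ∃ B, ∀ t y, Var[fun x => x i; localization ν t y] ≤ B := fun i =>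
    hν.exists_variance_localization_le (by fun_prop)
  choose B hB using hvar
  refine ⟨√(∑ i, ∑ j, B i * B j + e), fun p => ?_⟩
  have := isProbabilityMeasure_localization hν p.1 p.2
  have hmemLp : ∀ i : ι, MemLp (fun x => x i) 2 (localization ν p.1 p.2) := fun i =>
    (isCompactlySupported_localization hν _ _).memLp (by fun_prop) 2
  have hB_nonneg : ∀ i, 0 ≤ B i := fun i => (variance_nonneg _ _).trans (hB i p.1 p.2)
  unfold covScale covHSSq
  gcongr with i _ j _
  exact (sq_covariance_le (hmemLp i) (hmemLp j)).trans (mul_le_mul (hB i _ _) (hB j _ _)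
    (variance_nonneg _ _) (hB_nonneg i))

theorem IsLogConcaveMeasure.generatorGEAt_variance_sub_barrier [DecidableEq ι]
    (hlc : IsLogConcaveMeasure ν) (hν : IsCompactlySupported ν) (hφ : Continuous φ) (he : 0 < e)
    {p : ℝ × EuclideanSpace ℝ ι} (hp : 0 ≤ p.1)
    (hpR : barrierConst * (p.1 * covScale ν e p) ≤ 1 / 2) :
    GeneratorGEAt (localizationMean ν p.1 p.2)
      (fun q => Var[φ; localization ν q.1 q.2] - barrier (covScale ν e q) q.1) p
      (-covScale ν e p *
        (Var[φ; localization ν p.1 p.2] - barrier (covScale ν e p) p.1)) := by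
  have hR := covScale_pos (ν := ν) he p
  have hsqrt := sqrt_covHSSq_le_covScale (ν := ν) he p
  obtain ⟨gV, cV, hV, hcV⟩ := hν.exists_hasGeneratorAt_variance hφ p.1 p.2
  obtain ⟨gS, cS, hS, hcS⟩ := hlc.exists_hasGeneratorAt_covHSSq hν hp p.2
  refine ⟨_, _, _, hV.sub ((HasGeneratorAt.time_mul (hasDerivAt_barrierSlope (covScale ν e p) p.1)
    (hS.add (.time (hasDerivAt_const p.1 e)))).add
      (.time (hasDerivAt_const p.1 (8 * barrierConst * covScale ν e p)))), ?_, fun q => ?_, ?_⟩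
  · simp only [← covScale_sq he p, ← barrier_eq_tangent hR.ne']
  · simp only [← covScale_sq he q]
    exact sub_le_sub_left (barrier_le_tangent hR _ _) _
  · have hcS' : cS ≤ reverseHolderConst * covScale ν e p ^ 3 := hcS.trans (by
      have := reverseHolderConst_nonneg
      gcongr)
    have hcV' : -(covScale ν e p * Var[φ; localization ν p.1 p.2]) ≤ cV :=
      (neg_le_neg (mul_le_mul_of_nonneg_right hsqrt (variance_nonneg _ _))).trans hcV
    have hdissipation := mul_barrier_le_dissipation hR hp hpR hcS'
    simp only [← covScale_sq he p]
    linarith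

theorem IsLogConcaveMeasure.mul_covScale_lt_of_barrier_lt (hlc : IsLogConcaveMeasure ν)
    (hν : IsCompactlySupported ν) (hφ : LipschitzWith 1 φ) (he : 0 < e)
    {p : ℝ × EuclideanSpace ℝ ι} (hp : 0 ≤ p.1)
    (hpR : barrierConst * (p.1 * covScale ν e p) ≤ 1 / 2)
    (hbarrier : barrier (covScale ν e p) p.1 < Var[φ; localization ν p.1 p.2]) :
    barrierConst * (p.1 * covScale ν e p) < 1 / 2 := by
  refine hpR.lt_of_ne fun hexit => ?_
  have := isProbabilityMeasure_localization hν p.1 p.2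
  have hvar : p.1 * Var[φ; localization ν p.1 p.2] ≤ 4 :=
    (hlc.isStronglyLogConcaveMeasure_localization p.1 p.2).mul_variance_le
      (isCompactlySupported_localization hν _ _) hp hφ
  have hp_pos : 0 < p.1 := hp.lt_of_ne' fun h => by
    rw [h] at hexit
    norm_num at hexit
  have hlow := (le_barrier (covScale_pos he p).le hpR).trans_lt hbarrier
  have : p.1 * (8 * barrierConst * covScale ν e p) < 4 :=
    (mul_lt_mul_of_pos_left hlow hp_pos).trans_le hvar
  linarith

end LocalizedVariance

section ThinShellCompactlySupported

open Topology

variable {ι : Type*} [Fintype ι] {ν : Measure (EuclideanSpace ℝ ι)} [IsProbabilityMeasure ν]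
  {φ : EuclideanSpace ℝ ι → ℝ}

theorem IsLogConcaveMeasure.variance_le_sqrt_covHSSq_add
    (hlc : IsLogConcaveMeasure ν) (hν : IsCompactlySupported ν) (hφ : LipschitzWith 1 φ)
    {e : ℝ} (he : 0 < e) : Var[φ; ν] ≤ 16 * barrierConst * √(covHSSq ν + e) := by
  classical
  have hκ := barrierConst_pos
  obtain ⟨r, hr, hνr⟩ := hν.exists_ae_norm_le
  obtain ⟨B, hB⟩ := hν.exists_variance_localization_le hφ.continuous
  obtain ⟨l, hl⟩ := hν.exists_covScale_le e
  have hR_pos := covScale_pos (ν := ν) he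
  have hR_cont : Continuous (covScale ν e) := hν.continuous_covScale
  have htR_cont : Continuous fun p : ℝ × EuclideanSpace ℝ ι =>
    barrierConst * (p.1 * covScale ν e p) := by fun_prop
  set D := {p : ℝ × EuclideanSpace ℝ ι |
    0 ≤ p.1 ∧ barrierConst * (p.1 * covScale ν e p) ≤ 1 / 2}
  have hV_cont : Continuous fun p : ℝ × EuclideanSpace ℝ ι => Var[φ; localization ν p.1 p.2] := by
    simpa only [covariance_self hφ.continuous.aemeasurable] using
      hν.continuous_covariance_localization hφ.continuous hφ.continuous
  have hDT : ∀ p ∈ D, p.1 ∈ Set.Icc 0 (1 / 2 / (barrierConst * √e)) := fun p hp => by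
    refine ⟨hp.1, (le_div_iff₀ (mul_pos hκ (sqrt_pos.mpr he))).mpr (le_trans ?_ hp.2)⟩
    rw [mul_left_comm]
    gcongr
    exacts [hp.1, sqrt_le_covScale ν e p]
  have hW := nonpos_of_generatorGEAt (D := D)
    (W := fun p => Var[φ; localization ν p.1 p.2] - barrier (covScale ν e p) p.1)
    ((isClosed_le continuous_const continuous_fst).inter (isClosed_le htR_cont continuous_const))
    hDT (hV_cont.sub (by unfold barrier; fun_prop)) (B := B) (fun p hp => ?_) hr
    ((hR_pos 0).le.trans (hl 0)) (fun p hp hpos => ?_) (fun p hp hpos =>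
      ⟨_, hν.sum_localizationMean_mul_le hνr p.1 p.2, ?_⟩) 0 (by simp [D])
  · simpa [localization_zero_zero, barrier, covScale] using hW
  · have := le_barrier (hR_pos p).le hp.2
    linarith [hB p.1 p.2, mul_pos hκ (hR_pos p)]
  · have hlt := hlc.mul_covScale_lt_of_barrier_lt hν hφ he hp.1 hp.2 (sub_pos.mp hpos)
    filter_upwards [self_mem_nhdsWithin,
      nhdsWithin_le_nhds (htR_cont.continuousAt.eventually_lt_const hlt)] with q hq hqR
    exact ⟨hp.1.trans hq, hqR.le⟩
  · obtain ⟨F, g, c, hF, hFp, hFle, hc⟩ :=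
      hlc.generatorGEAt_variance_sub_barrier hν hφ.continuous he hp.1 hp.2
    exact ⟨F, g, c, hF, hFp, hFle,
      (mul_le_mul_of_nonneg_right (neg_le_neg (hl p)) hpos.le).trans hc⟩

theorem IsLogConcaveMeasure.variance_le_of_isCompactlySupported
    (hlc : IsLogConcaveMeasure ν) (hν : IsCompactlySupported ν) (hφ : LipschitzWith 1 φ) :
    Var[φ; ν] ≤ 16 * barrierConst * √(covHSSq ν) := by
  have hlim : Filter.Tendsto (fun e => 16 * barrierConst * √(covHSSq ν + e)) (𝓝[>] 0)
      (𝓝 (16 * barrierConst * √(covHSSq ν + 0))) :=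
    (Continuous.tendsto (by fun_prop) 0).mono_left nhdsWithin_le_nhds
  rw [add_zero] at hlim
  refine ge_of_tendsto hlim ?_
  filter_upwards [self_mem_nhdsWithin] with e he using hlc.variance_le_sqrt_covHSSq_add hν hφ he

end ThinShellCompactlySupported

/-! ### Approximation by conditioning on balls -/

section Conditioning

open Filter Topology

variable {α : Type*} [MeasurableSpace α] {μ : Measure α} {K : ℕ → Set α} {f g : α → ℝ}

theorem isCompactlySupported_cond [TopologicalSpace α] {s : Set α} (hs : IsCompact s)
    (hsm : MeasurableSet s) : IsCompactlySupported μ[|s] :=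
  ⟨s, hs, ae_cond_mem hsm⟩

theorem memLp_cond {p : ℝ≥0∞} (hf : MemLp f p μ) (s : Set α) [IsProbabilityMeasure μ[|s]] :
    MemLp f p μ[|s] :=
  (hf.restrict s).smul_measure (ENNReal.inv_ne_top.mpr fun hs =>
    IsProbabilityMeasure.ne_zero μ[|s] (cond_eq_zero_of_meas_eq_zero hs))

variable [IsProbabilityMeasure μ]

theorem tendsto_integral_cond (hK : ∀ N, MeasurableSet (K N)) (hmono : Monotone K)
    (hunion : ⋃ N, K N = Set.univ) (hf : Integrable f μ) :
    Tendsto (fun N => ∫ x, f x ∂μ[|K N]) atTop (𝓝 (∫ x, f x ∂μ)) := by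
  have hset : ∀ {h : α → ℝ}, Integrable h μ →
      Tendsto (fun N => ∫ x in K N, h x ∂μ) atTop (𝓝 (∫ x, h x ∂μ)) := fun {h} hh => by
    simpa only [hunion, setIntegral_univ] using
      tendsto_setIntegral_of_monotone hK hmono hh.integrableOn
  have hmass : Tendsto (fun N => μ.real (K N)) atTop (𝓝 1) := by
    simpa using hset (integrable_const (1 : ℝ))
  simpa [ProbabilityTheory.cond, integral_smul_measure, measureReal_def] using
    (hmass.inv₀ one_ne_zero).mul (hset hf)

theorem eventually_isProbabilityMeasure_cond (hK : Monotone K) (hunion : ⋃ N, K N = Set.univ) :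
    ∀ᶠ N in atTop, IsProbabilityMeasure μ[|K N] := by
  have hmass : Tendsto (fun N => μ (K N)) atTop (𝓝 1) := by
    simpa only [Function.comp_def, hunion, measure_univ] using
      tendsto_measure_iUnion_atTop (μ := μ) hK
  filter_upwards [hmass.eventually_const_lt zero_lt_one] with N hN
  exact cond_isProbabilityMeasure hN.ne'

theorem tendsto_covariance_cond (hK : ∀ N, MeasurableSet (K N)) (hmono : Monotone K)
    (hunion : ⋃ N, K N = Set.univ) (hf : MemLp f 2 μ) (hg : MemLp g 2 μ) :
    Tendsto (fun N => cov[f, g; μ[|K N]]) atTop (𝓝 cov[f, g; μ]) := by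
  rw [ProbabilityTheory.covariance_eq_sub hf hg]
  have hlim {h : α → ℝ} (hh : Integrable h μ) := tendsto_integral_cond hK hmono hunion hh
  refine ((hlim (hf.integrable_mul hg)).sub ((hlim (hf.integrable one_le_two)).mul
    (hlim (hg.integrable one_le_two)))).congr' ?_
  filter_upwards [eventually_isProbabilityMeasure_cond (μ := μ) hmono hunion] with N hN
  exact (ProbabilityTheory.covariance_eq_sub (memLp_cond hf _) (memLp_cond hg _)).symm

end Conditioning

section SecondMoment

open Filter Topology

variable {ι : Type*} [Fintype ι] {μ : Measure (EuclideanSpace ℝ ι)} [IsProbabilityMeasure μ]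
  {φ : EuclideanSpace ℝ ι → ℝ}

theorem memLp_of_lipschitzWith {p : ℝ≥0∞} (hμ : MemLp id p μ) (hφ : LipschitzWith 1 φ) :
    MemLp φ p μ := by
  refine (hμ.norm.add (memLp_const |φ 0|)).mono hφ.continuous.aestronglyMeasurable
    (.of_forall fun x => ?_)
  have hdist : |φ x - φ 0| ≤ ‖x‖ := by simpa [dist_eq] using hφ.dist_le_mul x 0
  simp only [Pi.add_apply, id_eq, norm_eq_abs]
  refine le_trans ?_ (le_abs_self _)
  linarith [abs_sub_abs_le_abs_sub (φ x) (φ 0)]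

theorem IsLogConcaveMeasure.variance_le (hlc : IsLogConcaveMeasure μ) (hμ : MemLp id 2 μ)
    (hφ : LipschitzWith 1 φ) : Var[φ; μ] ≤ 16 * barrierConst * √(covHSSq μ) := by
  set K : ℕ → Set (EuclideanSpace ℝ ι) := fun N => Metric.closedBall 0 N
  have hK : ∀ N, MeasurableSet (K N) := fun N => Metric.isClosed_closedBall.measurableSet
  have hmono : Monotone K := fun a b hab =>
    Metric.closedBall_subset_closedBall (by exact_mod_cast hab)
  have hunion : ⋃ N, K N = Set.univ := Metric.iUnion_closedBall_nat 0
  have hcov {f g : EuclideanSpace ℝ ι → ℝ} (hf : LipschitzWith 1 f) (hg : LipschitzWith 1 g) :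
      Tendsto (fun N => cov[f, g; μ[|K N]]) atTop (𝓝 cov[f, g; μ]) :=
    tendsto_covariance_cond hK hmono hunion (memLp_of_lipschitzWith hμ hf)
      (memLp_of_lipschitzWith hμ hg)
  have hcoord : ∀ i : ι, LipschitzWith 1 fun x : EuclideanSpace ℝ ι => x i := fun i =>
    LipschitzWith.of_dist_le_mul fun x y => by
      simpa [dist_eq_norm] using PiLp.norm_apply_le (x - y) i
  have hvar := hcov hφ hφ
  simp only [covariance_self hφ.continuous.aemeasurable] at hvar
  refine le_of_tendsto_of_tendsto hvar (Tendsto.const_mul _ (Tendsto.sqrt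
    (tendsto_finsetSum _ fun i _ => tendsto_finsetSum _ fun j _ =>
      (hcov (hcoord i) (hcoord j)).pow 2))) ?_
  filter_upwards [eventually_isProbabilityMeasure_cond (μ := μ) hmono hunion] with N hN
  exact (hlc.cond (hK N) (convex_closedBall 0 _)).variance_le_of_isCompactlySupported
    (isCompactlySupported_cond (isCompact_closedBall 0 _) (hK N)) hφ

end SecondMoment

/-! ### Log-concave densities -/

namespace IsLogConcaveFn

theorem mul_le_sq_midpoint {E : Type*} [AddCommGroup E] [Module ℝ E] {f : E → ℝ}
    (hf : IsLogConcaveFn f) (x y : E) : f x * f y ≤ f (midpoint ℝ x y) ^ 2 := by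
  have hmid := hf.2 x y 2⁻¹ (by norm_num) (by norm_num)
  rw [show (1 : ℝ) - 2⁻¹ = 2⁻¹ by norm_num, ← smul_add, ← invOf_eq_inv, ← midpoint_eq_smul_add,
    invOf_eq_inv, ← mul_rpow (hf.1 x) (hf.1 y), ← one_div, ← sqrt_eq_rpow] at hmid
  calc f x * f y = √(f x * f y) ^ 2 := (sq_sqrt (mul_nonneg (hf.1 x) (hf.1 y))).symm
    _ ≤ f (midpoint ℝ x y) ^ 2 := by gcongr

theorem concaveOn_log {E : Type*} [AddCommGroup E] [Module ℝ E] {f : E → ℝ}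
    (hf : IsLogConcaveFn f) : ConcaveOn ℝ {x | 0 < f x} fun x => log (f x) := by
  have hpow {x y : E} (hx : 0 < f x) (hy : 0 < f y) {a b : ℝ} (ha : 0 ≤ a) (hb : 0 ≤ b)
      (hab : a + b = 1) : 0 < f x ^ a * f y ^ b ∧ f x ^ a * f y ^ b ≤ f (a • x + b • y) := by
    obtain rfl : b = 1 - a := by linarith
    exact ⟨by positivity, hf.2 x y a ha (by linarith)⟩
  refine ⟨fun x hx y hy a b ha hb hab => ?_, fun x hx y hy a b ha hb hab => ?_⟩
  · exact (hpow hx hy ha hb hab).1.trans_le (hpow hx hy ha hb hab).2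
  · have hx' : 0 < f x := hx
    have hy' : 0 < f y := hy
    have hlog := log_le_log (hpow hx hy ha hb hab).1 (hpow hx hy ha hb hab).2
    rwa [log_mul (by positivity) (by positivity), log_rpow hx', log_rpow hy'] at hlog

theorem isLogConcaveMeasure_withDensity {E : Type*} [NormedAddCommGroup E] [NormedSpace ℝ E]
    [FiniteDimensional ℝ E] [MeasurableSpace E] [BorelSpace E] {μ : Measure E} [μ.IsAddHaarMeasure]
    (hμ : IsLogConcaveMeasure μ) {f : E → ℝ} (hf : IsLogConcaveFn f) :
    IsLogConcaveMeasure (μ.withDensity fun x => ENNReal.ofReal (f x)) := by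
  classical
  set U : Set E := interior {x | 0 < f x}
  have hpos : ∀ x ∈ U, 0 < f x := fun x hx =>
    interior_subset (s := {x | 0 < f x}) hx
  have hcont : ContinuousOn f U :=
    (continuous_exp.comp_continuousOn hf.concaveOn_log.continuousOn_interior).congr
      fun x hx => (exp_log (hpos x hx)).symm
  -- `f` need not be Borel: on the boundary of its support, a null set, its values are arbitrary.
  have hae : (fun x => ENNReal.ofReal (f x)) =ᵐ[μ] U.indicator fun x => ENNReal.ofReal (f x) := by
    filter_upwards [measure_eq_zero_iff_ae_notMem.mp
      (hf.concaveOn_log.1.addHaar_frontier μ)] with x hx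
    by_cases hxU : x ∈ U
    · rw [Set.indicator_of_mem hxU]
    · rw [Set.indicator_of_notMem hxU, ENNReal.ofReal_eq_zero]
      exact not_lt.mp fun hfx => hx ⟨subset_closure hfx, hxU⟩
  rw [withDensity_congr_ae hae]
  refine hμ.withDensity ?_ fun x y => ?_
  · rw [← Set.piecewise_eq_indicator]
    exact (ENNReal.continuous_ofReal.comp_continuousOn hcont).measurable_piecewise
      continuousOn_const isOpen_interior.measurableSet
  · by_cases hxy : x ∈ U ∧ y ∈ U
    · have hmid : midpoint ℝ x y ∈ U :=
        hf.concaveOn_log.1.interior.midpoint_mem hxy.1 hxy.2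
      rw [Set.indicator_of_mem hxy.1, Set.indicator_of_mem hxy.2, Set.indicator_of_mem hmid,
        ← ENNReal.ofReal_mul (hf.1 x), ← ENNReal.ofReal_pow (hf.1 _)]
      exact ENNReal.ofReal_le_ofReal (hf.mul_le_sq_midpoint x y)
    · rcases not_and_or.mp hxy with hx | hy
      · simp [hx]
      · simp [hy]

end IsLogConcaveFn

/-! ### Linear images of isotropic vectors -/

section MatrixNorms

variable {n : ℕ} (A : Matrix (Fin n) (Fin n) ℝ) (x : EuclideanSpace ℝ (Fin n))

theorem mApp_apply_eq_inner (i : Fin n) : mApp A x i = ⟪x, WithLp.toLp 2 (A i)⟫ := by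
  simp [mApp, Matrix.toLpLin_apply, Matrix.mulVec, dotProduct, PiLp.inner_apply]

theorem sum_sq_inner_row_eq_norm_mApp_sq :
    ∑ i, ⟪x, WithLp.toLp 2 (A i)⟫ ^ 2 = ‖mApp A x‖ ^ 2 := by
  simp [EuclideanSpace.norm_sq_eq, mApp_apply_eq_inner]

theorem sum_norm_row_sq_eq_hsNorm_sq :
    ∑ i, ‖(WithLp.toLp 2 (A i) : EuclideanSpace ℝ (Fin n))‖ ^ 2 = hsNorm A ^ 2 := by
  rw [hsNorm, sq_sqrt (by positivity)]
  simp [EuclideanSpace.norm_sq_eq]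

theorem norm_mApp_le : ‖mApp A x‖ ≤ opNorm A * ‖x‖ :=
  (LinearMap.toContinuousLinearMap (Matrix.toEuclideanLin A)).le_opNorm x

theorem opNorm_nonneg : 0 ≤ opNorm A := norm_nonneg _

theorem hsNorm_nonneg : 0 ≤ hsNorm A := sqrt_nonneg _

theorem opNorm_le_hsNorm : opNorm A ≤ hsNorm A := by
  refine ContinuousLinearMap.opNorm_le_bound _ (hsNorm_nonneg A) fun x => ?_
  refine le_of_sq_le_sq ?_ (mul_nonneg (hsNorm_nonneg A) (norm_nonneg x))
  calc ‖mApp A x‖ ^ 2 = ∑ i, ⟪x, WithLp.toLp 2 (A i)⟫ ^ 2 :=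
        (sum_sq_inner_row_eq_norm_mApp_sq A x).symm
    _ ≤ ∑ i, (‖x‖ * ‖(WithLp.toLp 2 (A i) : EuclideanSpace ℝ (Fin n))‖) ^ 2 :=
        Finset.sum_le_sum fun i _ => sq_le_sq' (neg_le_of_abs_le (abs_real_inner_le_norm _ _))
          (real_inner_le_norm _ _)
    _ = (hsNorm A * ‖x‖) ^ 2 := by
        simp only [mul_pow, ← Finset.mul_sum, sum_norm_row_sq_eq_hsNorm_sq]
        exact mul_comm _ _

end MatrixNorms

namespace Isotropic

variable {Ω : Type*} [MeasurableSpace Ω] {P : Measure Ω} {n : ℕ}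
  {X : Ω → EuclideanSpace ℝ (Fin n)}

theorem memLp_two (hX : Isotropic P X) (hXm : AEStronglyMeasurable X P) : MemLp X 2 P := by
  refine (memLp_two_iff_integrable_sq_norm hXm).2 ?_
  simp only [EuclideanSpace.norm_sq_eq, norm_eq_abs, sq_abs]
  refine integrable_finsetSum _ fun i _ => ?_
  -- The Bochner integral of a non-integrable function is `0`, not `1`.
  have hint := Integrable.of_integral_ne_zero (f := fun ω =>
    ⟪X ω, EuclideanSpace.single i (1 : ℝ)⟫ * ⟪X ω, EuclideanSpace.single i (1 : ℝ)⟫) (μ := P) (by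
      rw [hX.2]; simp)
  simpa [EuclideanSpace.inner_single_right, sq] using hint

variable [IsProbabilityMeasure P]

theorem covariance_inner (hX : Isotropic P X) (hXm : AEStronglyMeasurable X P)
    (θ η : EuclideanSpace ℝ (Fin n)) : cov[fun ω => ⟪X ω, θ⟫, fun ω => ⟪X ω, η⟫; P] = ⟪θ, η⟫ := by
  have hmean : ∀ v, ∫ ω, ⟪X ω, v⟫ ∂P = 0 := fun v => by
    simp only [real_inner_comm v]
    rw [integral_inner ((hX.memLp_two hXm).integrable one_le_two), hX.1, inner_zero_right]
  simp only [covariance, hmean, sub_zero, hX.2]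

theorem covHSSq_map_mApp_le (hX : Isotropic P X) (hXm : Measurable X)
    (A : Matrix (Fin n) (Fin n) ℝ) :
    covHSSq (P.map fun ω => mApp A (X ω)) ≤ (opNorm A * hsNorm A) ^ 2 := by
  have hAX : Measurable fun ω => mApp A (X ω) :=
    (Matrix.toEuclideanLin A).continuous_of_finiteDimensional.measurable.comp hXm
  have hcov : ∀ i j, cov[fun x => x i, fun x => x j; P.map fun ω => mApp A (X ω)] =
      ⟪WithLp.toLp 2 (A i), WithLp.toLp 2 (A j)⟫ := fun i j => by
    rw [covariance_map_fun (by fun_prop) (by fun_prop) hAX.aemeasurable]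
    simp only [mApp_apply_eq_inner]
    exact hX.covariance_inner hXm.aestronglyMeasurable _ _
  simp only [covHSSq, hcov, sum_sq_inner_row_eq_norm_mApp_sq]
  calc ∑ i, ‖mApp A (WithLp.toLp 2 (A i))‖ ^ 2
      ≤ ∑ i, (opNorm A * ‖(WithLp.toLp 2 (A i) : EuclideanSpace ℝ (Fin n))‖) ^ 2 := by
        gcongr; exact norm_mApp_le A _
    _ = (opNorm A * hsNorm A) ^ 2 := by
        simp only [mul_pow, ← Finset.mul_sum, sum_norm_row_sq_eq_hsNorm_sq]

end Isotropic

theorem statement2_general :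
    ∃ C : ℝ, 0 < C ∧
      ∀ (n : ℕ) (Ω : Type*) (_mΩ : MeasurableSpace Ω) (P : Measure Ω),
        IsProbabilityMeasure P →
        ∀ (X : Ω → EuclideanSpace ℝ (Fin n)) (f : EuclideanSpace ℝ (Fin n) → ℝ)
          (A : Matrix (Fin n) (Fin n) ℝ) (φ : EuclideanSpace ℝ (Fin n) → ℝ),
          HasDensityFn P X f → IsLogConcaveFn f → Isotropic P X → LipschitzWith 1 φ →
          √(variance (fun ω => φ (mApp A (X ω))) P) ≤ C * √(opNorm A * hsNorm A) := by
  have hκ := barrierConst_pos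
  refine ⟨√(16 * barrierConst), by positivity, ?_⟩
  intro n Ω _ P _ X f A φ ⟨hXm, hXf⟩ hf hX hφ
  have hA : Continuous (Matrix.toEuclideanLin A) :=
    (Matrix.toEuclideanLin A).continuous_of_finiteDimensional
  have hAX : Measurable fun ω => mApp A (X ω) := hA.measurable.comp hXm
  set ν := P.map fun ω => mApp A (X ω) with hν
  have : IsProbabilityMeasure ν := Measure.isProbabilityMeasure_map hAX.aemeasurable
  have hlc : IsLogConcaveMeasure ν := by
    rw [hν, show (fun ω => mApp A (X ω)) = Matrix.toEuclideanLin A ∘ X from rfl,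
      ← Measure.map_map hA.measurable hXm, hXf]
    exact (hf.isLogConcaveMeasure_withDensity (isLogConcaveMeasure_volume_euclideanSpace n)).map
      _ hA.measurable
  have hν₂ : MemLp id 2 ν := (memLp_map_measure_iff aestronglyMeasurable_id hAX.aemeasurable).2
    ((LinearMap.toContinuousLinearMap (Matrix.toEuclideanLin A)).comp_memLp'
      (hX.memLp_two hXm.aestronglyMeasurable))
  have hcov : √(covHSSq ν) ≤ opNorm A * hsNorm A :=
    sqrt_le_iff.2 ⟨mul_nonneg (opNorm_nonneg A) (hsNorm_nonneg A), hX.covHSSq_map_mApp_le hXm A⟩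
  have hvar := hlc.variance_le hν₂ hφ
  rw [variance_map hφ.continuous.aemeasurable hAX.aemeasurable] at hvar
  rw [← sqrt_mul (by positivity)]
  exact sqrt_le_sqrt (hvar.trans (by gcongr))

/-! ### The ψ_α form of the bound -/

theorem IsPsiAlpha.half_le {Ω : Type*} [MeasurableSpace Ω] {P : Measure Ω} {n : ℕ} [NeZero n]
    {X : Ω → EuclideanSpace ℝ (Fin n)} {α b : ℝ} (hψ : IsPsiAlpha P X α b)
    (hX : Isotropic P X) (hα : 1 ≤ α) : 1 / 2 ≤ b := by
  set e : EuclideanSpace ℝ (Fin n) := EuclideanSpace.single 0 1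
  have hsq : ∫ ω, ⟪X ω, e⟫ ^ 2 ∂P = 1 := by simpa [← sq, e] using hX.2 e e
  have hone : 1 ≤ b * 2 ^ (1 / α) := by simpa [sq_abs, hsq] using hψ 2 le_rfl e
  have htwo : (2 : ℝ) ^ (1 / α) ≤ 2 := by
    simpa using rpow_le_rpow_of_exponent_le one_le_two ((div_le_one (by linarith)).2 hα)
  have hpos : (0 : ℝ) < 2 ^ (1 / α) := by positivity
  nlinarith

theorem sqrt_mul_sqrt_le_mul_rpow_neg {m s b β : ℝ} (hs : 0 ≤ s) (hsm : s ^ 2 ≤ m)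
    (hb : 1 / 2 ≤ b) (hβ₀ : 0 ≤ β) (hβ : β ≤ 1 / 4) :
    √(s * √m) ≤ √2 * √m * (m / (s ^ 2 * b ^ 2)) ^ (-β) := by
  rcases hs.eq_or_lt with rfl | hs
  · simp only [zero_mul, sqrt_zero]; positivity
  have hm : 0 < m := (pow_pos hs 2).trans_le hsm
  have hr : 0 < s / (2 * √m) := by positivity
  have hr₁ : s / (2 * √m) ≤ 1 := by
    rw [div_le_one (by positivity)]
    linarith [le_sqrt_of_sq_le hsm, sqrt_nonneg m]
  have hratio : (m / (s ^ 2 * b ^ 2))⁻¹ ≥ (s / (2 * √m)) ^ 2 := by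
    rw [inv_div, div_pow, mul_pow, sq_sqrt hm.le, ge_iff_le, div_le_div_iff₀ (by positivity) hm]
    nlinarith [mul_pos (pow_pos hs 2) hm, mul_self_le_mul_self (by norm_num) hb]
  calc √(s * √m) = √2 * √m * √(s / (2 * √m)) := by
        rw [← sqrt_mul (by positivity), ← sqrt_mul (by positivity)]
        congr 1
        field_simp
        rw [sq_sqrt hm.le]
    _ ≤ √2 * √m * (m / (s ^ 2 * b ^ 2)) ^ (-β) := by
        gcongr
        calc √(s / (2 * √m)) = ((s / (2 * √m)) ^ 2) ^ (1 / 4 : ℝ) := by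
              rw [sqrt_eq_rpow, ← rpow_natCast, ← rpow_mul hr.le]; norm_num
          _ ≤ ((s / (2 * √m)) ^ 2) ^ β :=
              rpow_le_rpow_of_exponent_ge (by positivity) (pow_le_one₀ hr.le hr₁) hβ
          _ ≤ ((m / (s ^ 2 * b ^ 2))⁻¹) ^ β := by gcongr
          _ = (m / (s ^ 2 * b ^ 2)) ^ (-β) := by
              rw [rpow_neg (by positivity), inv_rpow (by positivity)]

theorem IsPsiAlpha.sqrt_opNorm_mul_hsNorm_le {Ω : Type*} [MeasurableSpace Ω] {P : Measure Ω}
    {n : ℕ} {X : Ω → EuclideanSpace ℝ (Fin n)} {α b : ℝ} (hψ : IsPsiAlpha P X α b)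
    (hX : Isotropic P X) (hα : 1 ≤ α) (hα₂ : α ≤ 2) {A : Matrix (Fin n) (Fin n) ℝ}
    (hA : hsNorm A ^ 2 = n) :
    √(opNorm A * hsNorm A) ≤
      √2 * √n * ((n : ℝ) / (opNorm A ^ 2 * b ^ 2)) ^ (-(α / (2 * (2 + α)))) := by
  rcases n.eq_zero_or_pos with rfl | hn
  · have hhs : hsNorm A = 0 := by simpa using hA
    simp [hhs]
  have : NeZero n := ⟨hn.ne'⟩
  have hhs : hsNorm A = √n := by rw [← hA, sqrt_sq (hsNorm_nonneg A)]
  rw [hhs]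
  refine sqrt_mul_sqrt_le_mul_rpow_neg (opNorm_nonneg A) ?_ (hψ.half_le hX hα) (by positivity) ?_
  · rw [← hA]
    exact pow_le_pow_left₀ (opNorm_nonneg A) (opNorm_le_hsNorm A) 2
  · rw [div_le_iff₀ (by positivity)]
    linarith

/-- thin-shell estimate for `|AX|` under a ψ_α condition. -/
theorem statement2 :
    ∃ C : ℝ, 0 < C ∧
      ∀ (n : ℕ) (Ω : Type) (_mΩ : MeasurableSpace Ω) (P : Measure Ω),
        IsProbabilityMeasure P →
        ∀ (X : Ω → EuclideanSpace ℝ (Fin n)) (f : EuclideanSpace ℝ (Fin n) → ℝ)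
          (α b : ℝ) (A : Matrix (Fin n) (Fin n) ℝ),
          HasDensityFn P X f → IsLogConcaveFn f → Isotropic P X →
          1 ≤ α → α ≤ 2 → IsPsiAlpha P X α b →
          hsNorm A ^ 2 = n →
          Real.sqrt (variance (fun ω => ‖mApp A (X ω)‖) P) ≤
            C * (n : ℝ) ^ ((1:ℝ)/2) *
              ((n : ℝ) / (opNorm A ^ 2 * b ^ 2)) ^ (-(α / (2 * (2 + α)))) := by
  obtain ⟨C, hC, hgeneral⟩ := statement2_general
  refine ⟨C * √2, by positivity, fun n Ω _ P _ X f α b A hXf hf hX hα hα₂ hψ hA => ?_⟩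
  rw [← sqrt_eq_rpow, mul_assoc C, mul_assoc C]
  exact (hgeneral n Ω _ P ‹_› X f A _ hXf hf hX lipschitzWith_one_norm).trans
    (mul_le_mul_of_nonneg_left (hψ.sqrt_opNorm_mul_hsNorm_le hX hα hα₂ hA) hC.le)
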